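/- Let k ≥ 3 be an integer with k ∉ {4,5}. For all sufficiently large n, if G is an n-vertex W_{2k+1}-free simple graph attaining the maximum spectral radius among all n-vertex W_{2k+1}-free graphs and V(G) = L ⊔ R is a maximum cut of G, then n/2 − 1 ≤ |L| ≤ n/2 + 1 and n/2 − 1 ≤ |R| ≤ n/2 + 1. -/

import Mathlib

/-- The wheel graph on `t` vertices: vertex `0` joined to every vertex of the
cycle `1, 2, …, t-1` (with `t-1` adjacent to `1`). -/
def wheelGraph (t : ℕ) : SimpleGraph (Fin t) where
  Adj a b := a ≠ b ∧ (a.val = 0 ∨ b.val = 0 ∨ a.val + 1 = b.val ∨ b.val + 1 = a.val ∨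
      (a.val = 1 ∧ b.val = t - 1) ∨ (b.val = 1 ∧ a.val = t - 1))
  symm := by
    constructor
    intro a b h
    exact ⟨h.1.symm, by tauto⟩
  loopless := by
    constructor
    intro a h
    exact h.1 rfl

/-- `G` contains a copy of `F`, i.e. a subgraph isomorphic to `F`. -/
def ContainsCopy {α β : Type*} (F : SimpleGraph α) (G : SimpleGraph β) : Prop :=
  ∃ f : α ↪ β, ∀ a b, F.Adj a b → G.Adj (f a) (f b)

/-- `G` is `W_t`-free: it contains no subgraph isomorphic to the wheel on `t` vertices. -/
def WheelFree (t : ℕ) {n : ℕ} (G : SimpleGraph (Fin n)) : Prop :=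
  ¬ ContainsCopy (wheelGraph t) G

/-- The spectral radius of `G`: the largest eigenvalue of its adjacency matrix. -/
noncomputable def lam1 {n : ℕ} (G : SimpleGraph (Fin n)) : ℝ := by
  classical
  exact sSup {μ : ℝ | Module.End.HasEigenvalue (Matrix.toLin' (G.adjMatrix ℝ)) μ}

/-- The number of edges of a graph on a finite vertex type. -/
noncomputable def edgeCount {V : Type*} [Fintype V] (G : SimpleGraph V) : ℕ := by
  classical
  exact G.edgeFinset.card

/-- The degree of a vertex. -/
noncomputable def deg {n : ℕ} (G : SimpleGraph (Fin n)) (v : Fin n) : ℕ := by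
  classical
  exact G.degree v

/-- The number of neighbours of `v` inside the set `A`. -/
noncomputable def degIn {n : ℕ} (G : SimpleGraph (Fin n)) (A : Finset (Fin n)) (v : Fin n) : ℕ := by
  classical
  exact (A.filter fun u => G.Adj v u).card

/-- The number of edges of `G` with one endpoint in `S` and the other outside `S`. -/
noncomputable def cutCount {n : ℕ} (G : SimpleGraph (Fin n)) (S : Finset (Fin n)) : ℕ := by
  classical
  exact ((Finset.univ : Finset (Fin n × Fin n)).filter
    fun p => G.Adj p.1 p.2 ∧ p.1 ∈ S ∧ p.2 ∉ S).card

/-- `(S, T)` is a maximum cut of `G`. -/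
def IsMaxCut {n : ℕ} (G : SimpleGraph (Fin n)) (S T : Finset (Fin n)) : Prop :=
  T = Sᶜ ∧ ∀ S' : Finset (Fin n), cutCount G S' ≤ cutCount G S

/-- `G` attains the maximum spectral radius among all `n`-vertex `W_t`-free graphs. -/
def IsSpexWheel (t : ℕ) {n : ℕ} (G : SimpleGraph (Fin n)) : Prop :=
  WheelFree t G ∧ ∀ H : SimpleGraph (Fin n), WheelFree t H → lam1 H ≤ lam1 G

/-- `G` attains the maximum number of edges among all `n`-vertex `W_t`-free graphs. -/
def IsExWheel (t : ℕ) {n : ℕ} (G : SimpleGraph (Fin n)) : Prop :=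
  WheelFree t G ∧ ∀ H : SimpleGraph (Fin n), WheelFree t H → edgeCount H ≤ edgeCount G

/-!
Joining a `(k - 1)`-regular graph made of copies of `K_k` and `K_{k-1,k-1}` to a graph with a single
edge gives a wheel-free competitor; with nearly balanced sides of sizes `l` and `r` it forces
`λ₁ (λ₁ - (k - 1)) ≥ l r + 1`. In the other direction, wheel-free graphs have sparse neighbourhoods,
so applying the eigenvalue equation twice shows that a maximum cut `(L, R)` of an extremal graph is
almost complete bipartite. Replacing the neighbourhood of a vertex by almost a whole side then shows
that all entries of the Perron vector are close to the maximum. In this situation, wheels with hub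
on one side and rim alternating between a vertex of that side and a short path of the other bound
the degrees inside `L` and `R` so well that `λ₁ (λ₁ - (k - 1)) ≤ |L| |R| + 5 / 2`, unless
`k ∈ {4, 5}`. Comparing the two bounds gives `|L| |R| ≥ l r - 1`, and parity yields
`||L| - |R|| ≤ 2`.
-/

namespace SpexWheel

open Finset Matrix SimpleGraph
open Filter (atTop eventually_atTop tendsto_add_atTop_nat)

/-! ### The spectral radius -/

section Spectral

variable {ι : Type*} [Fintype ι] {A : Matrix ι ι ℝ}

lemma dotProduct_mulVec_le_abs (hnonneg : ∀ i j, 0 ≤ A i j) (y : ι → ℝ) :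
    y ⬝ᵥ A *ᵥ y ≤ |y| ⬝ᵥ A *ᵥ |y| := by
  simp only [dotProduct, mulVec, mul_sum, Pi.abs_apply]
  refine sum_le_sum fun i _ => sum_le_sum fun j _ => ?_
  calc y i * (A i j * y j) ≤ |y i * (A i j * y j)| := le_abs_self _
    _ = |y i| * (A i j * |y j|) := by rw [abs_mul, abs_mul, abs_of_nonneg (hnonneg i j)]

variable [DecidableEq ι]

lemma spectrum_le_sSup (hA : A.IsHermitian) {μ : ℝ} (hμ : μ ∈ spectrum ℝ A) :
    μ ≤ sSup (spectrum ℝ A) := by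
  rw [hA.spectrum_real_eq_range_eigenvalues] at hμ ⊢
  exact le_csSup (Set.finite_range _).bddAbove hμ

lemma sSup_spectrum_mem [Nonempty ι] (hA : A.IsHermitian) :
    sSup (spectrum ℝ A) ∈ spectrum ℝ A := by
  rw [hA.spectrum_real_eq_range_eigenvalues]
  exact (Set.range_nonempty _).csSup_mem (Set.finite_range _)

lemma posSemidef_sSup_spectrum_sub (hA : A.IsHermitian) :
    (algebraMap ℝ (Matrix ι ι ℝ) (sSup (spectrum ℝ A)) - A).PosSemidef := by
  rw [posSemidef_iff_isHermitian_and_spectrum_nonneg, ← spectrum.singleton_sub_eq]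
  refine ⟨.sub (by simp [IsHermitian, algebraMap_eq_diagonal]) hA, ?_⟩
  rintro _ ⟨_, rfl, μ, hμ, rfl⟩
  exact sub_nonneg.2 (spectrum_le_sSup hA hμ)

lemma dotProduct_sSup_spectrum_sub_mulVec (A : Matrix ι ι ℝ) (y : ι → ℝ) :
    y ⬝ᵥ (algebraMap ℝ (Matrix ι ι ℝ) (sSup (spectrum ℝ A)) - A) *ᵥ y =
      sSup (spectrum ℝ A) * (y ⬝ᵥ y) - y ⬝ᵥ A *ᵥ y := by
  rw [sub_mulVec, dotProduct_sub, Algebra.algebraMap_eq_smul_one, smul_mulVec, one_mulVec,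
    dotProduct_smul, smul_eq_mul]

lemma dotProduct_mulVec_le_sSup_spectrum (hA : A.IsHermitian) (y : ι → ℝ) :
    y ⬝ᵥ A *ᵥ y ≤ sSup (spectrum ℝ A) * (y ⬝ᵥ y) := by
  have h := (posSemidef_sSup_spectrum_sub hA).dotProduct_mulVec_nonneg y
  rw [star_trivial, dotProduct_sSup_spectrum_sub_mulVec] at h
  linarith

/- If `y` is an eigenvector for the top eigenvalue, then `|y|` also attains the maximum of the
Rayleigh quotient, hence is an eigenvector as well. -/
theorem exists_nonneg_mulVec_eq_sSup_spectrum_smul [Nonempty ι] (hA : A.IsHermitian)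
    (hnonneg : ∀ i j, 0 ≤ A i j) :
    ∃ x : ι → ℝ, 0 ≤ x ∧ x ≠ 0 ∧ A *ᵥ x = sSup (spectrum ℝ A) • x := by
  have hmem := sSup_spectrum_mem hA
  rw [← spectrum_toLin', ← Module.End.hasEigenvalue_iff_mem_spectrum] at hmem
  obtain ⟨y, hy⟩ := hmem.exists_hasEigenvector
  have hAy : A *ᵥ y = sSup (spectrum ℝ A) • y := by simpa using hy.apply_eq_smul
  refine ⟨|y|, abs_nonneg y, by simpa using hy.2, ?_⟩
  have hmax : |y| ⬝ᵥ A *ᵥ |y| = sSup (spectrum ℝ A) * (|y| ⬝ᵥ |y|) := by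
    refine (dotProduct_mulVec_le_sSup_spectrum hA _).antisymm ?_
    calc sSup (spectrum ℝ A) * (|y| ⬝ᵥ |y|) = y ⬝ᵥ A *ᵥ y := by
          rw [hAy, dotProduct_smul, smul_eq_mul]
          simp only [dotProduct, Pi.abs_apply, abs_mul_abs_self]
      _ ≤ _ := dotProduct_mulVec_le_abs hnonneg y
  have hker := ((posSemidef_sSup_spectrum_sub hA).dotProduct_mulVec_zero_iff |y|).1
    (by rw [star_trivial, dotProduct_sSup_spectrum_sub_mulVec, hmax, sub_self])
  rw [sub_mulVec, sub_eq_zero, Algebra.algebraMap_eq_smul_one, smul_mulVec, one_mulVec] at hker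
  exact hker.symm

end Spectral

section Lam1

variable {n : ℕ} (G : SimpleGraph (Fin n)) [DecidableRel G.Adj]

lemma lam1_eq_sSup_spectrum :
    lam1 G = sSup (spectrum ℝ (G.adjMatrix ℝ)) := by
  simp only [lam1, Module.End.hasEigenvalue_iff_mem_spectrum, spectrum_toLin', Set.ofPred_mem_eq]
  congr!

lemma adjForm_le_lam1 (y : Fin n → ℝ) :
    y ⬝ᵥ G.adjMatrix ℝ *ᵥ y ≤ lam1 G * ∑ v, y v ^ 2 := by
  simpa only [lam1_eq_sSup_spectrum, dotProduct, ← sq] using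
    dotProduct_mulVec_le_sSup_spectrum (G.isHermitian_adjMatrix ℝ) y

/-- `x` is a nonnegative eigenvector of `G` for the eigenvalue `lam`, normalised to have maximum
entry `1`; the eigenvalue equation is written out as a sum over neighbours. -/
structure IsPerronVector (lam : ℝ) (x : Fin n → ℝ) : Prop where
  nonneg : ∀ v, 0 ≤ x v
  le_one : ∀ v, x v ≤ 1
  exists_eq_one : ∃ z, x z = 1
  eigen : ∀ v, lam * x v = ∑ u ∈ G.neighborFinset v, x u

theorem exists_isPerronVector [NeZero n] :
    ∃ x, IsPerronVector G (lam1 G) x := by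
  obtain ⟨x, hx0, hxne, hx⟩ := exists_nonneg_mulVec_eq_sSup_spectrum_smul
    (G.isHermitian_adjMatrix ℝ) (fun i j => by rw [SimpleGraph.adjMatrix_apply]; positivity)
  obtain ⟨z, -, hz⟩ := exists_max_image univ x univ_nonempty
  obtain ⟨w, hw⟩ := Function.ne_iff.1 hxne
  have hz_pos : 0 < x z := ((hx0 w).lt_of_ne' hw).trans_le (hz w (mem_univ w))
  refine ⟨fun v => x v / x z, fun v => div_nonneg (hx0 v) hz_pos.le,
    fun v => (div_le_one hz_pos).2 (hz v (mem_univ v)), ⟨z, div_self hz_pos.ne'⟩, fun v => ?_⟩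
  have hv := congrFun hx v
  rw [SimpleGraph.adjMatrix_mulVec_apply, ← lam1_eq_sSup_spectrum, Pi.smul_apply, smul_eq_mul] at hv
  rw [← sum_div, hv, mul_div_assoc]

end Lam1

lemma lam1_le {n : ℕ} [NeZero n] (G : SimpleGraph (Fin n)) : lam1 G ≤ n - 1 := by
  classical
  obtain ⟨x, hx⟩ := exists_isPerronVector G
  obtain ⟨z, hz⟩ := hx.exists_eq_one
  have hdeg : G.degree z + 1 ≤ n := by simpa using G.degree_lt_card_verts z
  calc lam1 G = ∑ u ∈ G.neighborFinset z, x u := by rw [← hx.eigen, hz, mul_one]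
    _ ≤ ∑ _u ∈ G.neighborFinset z, (1 : ℝ) := sum_le_sum fun _ _ => hx.le_one _
    _ = (G.degree z : ℝ) := by simp
    _ ≤ n - 1 := by rw [le_sub_iff_add_le]; exact_mod_cast hdeg

/-! ### Wheels with a prescribed hub -/

section Wheel

lemma wheelGraph_adj_zero_succ {m : ℕ} (i : Fin m) : (wheelGraph (m + 1)).Adj 0 i.succ :=
  ⟨(Fin.succ_ne_zero i).symm, .inl rfl⟩

lemma wheelGraph_adj_succ_succ {m : ℕ} [NeZero m] {i j : Fin m} :
    (wheelGraph (m + 1)).Adj i.succ j.succ ↔ i ≠ j ∧ (j = i + 1 ∨ i = j + 1) := by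
  have hadd : ∀ i : Fin m, (i + 1).val = if i.val + 1 = m then 0 else i.val + 1 := fun i => by
    rw [Fin.val_add, Fin.val_one', Nat.add_mod_mod]
    split_ifs with h
    · rw [h, Nat.mod_self]
    · exact Nat.mod_eq_of_lt (by omega)
  simp only [wheelGraph, ne_eq, Fin.val_succ, Fin.ext_iff, hadd, Nat.add_one_ne_zero, false_or]
  have := i.isLt
  have := j.isLt
  constructor <;> intro h <;> split_ifs at h ⊢ <;> omega

variable {V : Type*} {G : SimpleGraph V}

theorem containsCopy_wheelGraph_iff {m : ℕ} [NeZero m] (hm : 1 < m) :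
    ContainsCopy (wheelGraph (m + 1)) G ↔
      ∃ (c : V) (g : Fin m ↪ V), (∀ i, G.Adj c (g i)) ∧ ∀ i, G.Adj (g i) (g (i + 1)) := by
  constructor
  · rintro ⟨f, hf⟩
    refine ⟨f 0, (Fin.succEmb m).trans f, fun i => hf _ _ (wheelGraph_adj_zero_succ i),
      fun i => hf _ _ (wheelGraph_adj_succ_succ.2 ⟨by simp [hm.ne'], .inl rfl⟩)⟩
  · rintro ⟨c, g, hc, hg⟩
    refine ⟨⟨Fin.cons c g, Fin.cons_injective_iff.2 ⟨?_, g.injective⟩⟩, fun a b hab => ?_⟩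
    · rintro ⟨i, rfl⟩
      exact (hc i).ne rfl
    · cases a using Fin.cases with
      | zero =>
        cases b using Fin.cases with
        | zero => exact absurd rfl hab.1
        | succ j => exact hc j
      | succ i =>
        cases b using Fin.cases with
        | zero => exact (hc i).symm
        | succ j =>
          obtain ⟨-, rfl | rfl⟩ := wheelGraph_adj_succ_succ.1 hab
          · exact hg i
          · exact (hg j).symm

lemma containsCopy_wheelGraph_of_list {c : V} {l : List V} (hlen : 1 < l.length)
    (hnodup : l.Nodup) (hchain : l.IsChain G.Adj)
    (hclose : ∀ a ∈ l.getLast?, ∀ b ∈ l.head?, G.Adj a b) (hc : ∀ a ∈ l, G.Adj c a) :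
    ContainsCopy (wheelGraph (l.length + 1)) G := by
  have : NeZero l.length := ⟨by omega⟩
  refine (containsCopy_wheelGraph_iff hlen).2
    ⟨c, ⟨l.get, List.nodup_iff_injective_get.1 hnodup⟩, fun i => hc _ (l.get_mem i), fun i => ?_⟩
  have hadd := Fin.val_add i 1
  rw [Fin.val_one', Nat.add_mod_mod] at hadd
  change G.Adj l[i] l[(i + 1).val]
  obtain hi | hi := Nat.lt_or_ge (i.val + 1) l.length
  · simp only [hadd, Nat.mod_eq_of_lt hi]
    exact List.isChain_iff_getElem.1 hchain i hi
  · have hi' : i.val = l.length - 1 := by omega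
    simp only [hadd, hi', Nat.sub_add_cancel (show 1 ≤ l.length by omega), Nat.mod_self]
    refine hclose _ ?_ _ ?_
    · simp [List.getLast?_eq_getElem?, hi']
    · simp [List.head?_eq_getElem?]

variable (G) in
/-- A family of vertex-disjoint nonempty paths of `G` all of whose vertices lie in `R`; each path
is encoded as the list of its vertices. -/
structure IsPathSystem (R : Finset V) (Qs : List (List V)) : Prop where
  nil_notMem : [] ∉ Qs
  isChain : ∀ Q ∈ Qs, Q.IsChain G.Adj
  nodup : Qs.flatten.Nodup
  mem : ∀ q ∈ Qs.flatten, q ∈ R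

lemma zipWith_cons_flatten_perm :
    ∀ {us : List V} {Qs : List (List V)}, us.length = Qs.length →
      (List.zipWith List.cons us Qs).flatten.Perm (us ++ Qs.flatten)
  | [], [], _ => .refl _
  | u :: us, Q :: Qs, h => by
    simp only [List.zipWith_cons_cons, List.flatten_cons, List.cons_append]
    refine .cons u (((zipWith_cons_flatten_perm (by simpa using h)).append_left Q).trans ?_)
    simpa only [List.append_assoc] using List.perm_append_comm.append_right Qs.flatten

-- The rim of the wheel is `u₁ Q₁ u₂ Q₂ ⋯`.
theorem IsPathSystem.containsCopy_wheelGraph {R : Finset V} {Qs : List (List V)}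
    (hQs : IsPathSystem G R Qs) {m : ℕ} (hm : 1 < m) {c : V} {us : Finset V}
    (hcard : us.card = Qs.length) (hlen : us.card + Qs.flatten.length = m)
    (hadj : ∀ u ∈ us, ∀ q ∈ Qs.flatten, G.Adj u q) (hcu : ∀ u ∈ us, G.Adj c u)
    (hcq : ∀ q ∈ Qs.flatten, G.Adj c q) : ContainsCopy (wheelGraph (m + 1)) G := by
  set segs := List.zipWith List.cons us.toList Qs with hsegs
  have hperm : segs.flatten.Perm (us.toList ++ Qs.flatten) :=
    zipWith_cons_flatten_perm (by simpa using hcard)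
  have hform : ∀ s ∈ segs, ∃ u ∈ us, ∃ Q ∈ Qs, s = u :: Q := fun s hs => by
    rw [hsegs, ← List.map_uncurry_zip_eq_zipWith] at hs
    obtain ⟨⟨u, Q⟩, huQ, rfl⟩ := List.mem_map.1 hs
    exact ⟨u, us.mem_toList.1 (List.of_mem_zip huQ).1, Q, (List.of_mem_zip huQ).2, rfl⟩
  have hjoin : ∀ s ∈ segs, ∀ t ∈ segs, ∀ a ∈ s.getLast?, ∀ b ∈ t.head?, G.Adj a b := by
    intro s hs t ht
    obtain ⟨-, -, Q, hQ, rfl⟩ := hform s hs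
    obtain ⟨u, hu, -, -, rfl⟩ := hform t ht
    intro a ha b hb
    rw [List.getLast?_cons_of_ne_nil (ne_of_mem_of_not_mem hQ hQs.nil_notMem)] at ha
    obtain rfl : u = b := by simpa using hb
    exact (hadj u hu a (List.mem_flatten.2 ⟨Q, hQ, List.mem_of_getLast? ha⟩)).symm
  have hchain : segs.flatten.IsChain G.Adj := by
    refine (List.isChain_flatten fun h => ?_).2 ⟨fun s hs => ?_,
      (List.pairwise_of_forall_mem_list hjoin).isChain⟩
    · simpa using hform _ h
    · obtain ⟨u, hu, Q, hQ, rfl⟩ := hform s hs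
      exact List.isChain_cons.2 ⟨fun q hq => hadj u hu q
        (List.mem_flatten.2 ⟨Q, hQ, List.mem_of_head? hq⟩), hQs.isChain Q hQ⟩
  rw [← hlen, ← us.length_toList, ← List.length_append, ← hperm.length_eq]
  refine containsCopy_wheelGraph_of_list (c := c) ?_ (hperm.nodup_iff.2 ?_) hchain ?_ ?_
  · rwa [hperm.length_eq, List.length_append, us.length_toList, hlen]
  · refine us.nodup_toList.append hQs.nodup fun u hu hu' => ?_
    exact (hadj u (us.mem_toList.1 hu) u hu').ne rfl
  · intro a ha b hb
    rw [List.getLast?_flatten, Option.mem_def] at ha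
    rw [List.head?_flatten, Option.mem_def] at hb
    obtain ⟨s, hs, ha⟩ := List.exists_of_findSome?_eq_some ha
    obtain ⟨t, ht, hb⟩ := List.exists_of_findSome?_eq_some hb
    exact hjoin s (List.mem_reverse.1 hs) t ht a ha b hb
  · intro a ha
    rw [hperm.mem_iff, List.mem_append, Finset.mem_toList] at ha
    exact ha.elim (hcu a) (hcq a)

lemma containsCopy_wheelGraph_of_biclique {k : ℕ} (hk : 0 < k) {c : V} {A B : Finset V}
    (hA : A.card = k) (hB : B.card = k) (hAB : ∀ a ∈ A, ∀ b ∈ B, G.Adj a b)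
    (hcA : ∀ a ∈ A, G.Adj c a) (hcB : ∀ b ∈ B, G.Adj c b) :
    ContainsCopy (wheelGraph (2 * k + 1)) G := by
  have hflat : (B.toList.map fun b => [b]).flatten = B.toList := by
    rw [← List.flatMap_def, List.flatMap_singleton']
  have hB' : IsPathSystem G B (B.toList.map fun b => [b]) :=
    ⟨by simp, by simp, by rw [hflat]; exact B.nodup_toList, fun q => by simp [hflat]⟩
  refine hB'.containsCopy_wheelGraph (by omega) (by simp [hA, hB]) ?_ ?_ hcA ?_ <;>
    simp only [hflat, B.length_toList, B.mem_toList]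
  · omega
  · exact hAB
  · exact hcB

end Wheel

/-! ### A competitor -/

section Join

variable {W U β : Type*} {A : SimpleGraph W} {B : SimpleGraph U}

/-- The join of `A` and `B`: their disjoint union together with all edges between them. -/
def graphJoin (A : SimpleGraph W) (B : SimpleGraph U) : SimpleGraph (W ⊕ U) :=
  (A ⊕g B) ⊔ completeBipartiteGraph W U

@[simp] lemma graphJoin_adj_inl_inl {w w' : W} :
    (graphJoin A B).Adj (.inl w) (.inl w') ↔ A.Adj w w' := by simp [graphJoin]

@[simp] lemma graphJoin_adj_inr_inr {u u' : U} :
    (graphJoin A B).Adj (.inr u) (.inr u') ↔ B.Adj u u' := by simp [graphJoin]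

@[simp] lemma graphJoin_adj_inl_inr {w : W} {u : U} : (graphJoin A B).Adj (.inl w) (.inr u) := by
  simp [graphJoin]

@[simp] lemma graphJoin_adj_inr_inl {w : W} {u : U} : (graphJoin A B).Adj (.inr u) (.inl w) := by
  simp [graphJoin]

lemma eq_of_adj_of_edgeSet_subsingleton (hB : B.edgeSet.Subsingleton) {u v v' : U}
    (h : B.Adj u v) (h' : B.Adj u v') : v = v' :=
  Sym2.congr_right.1 (hB (B.mem_edgeSet.2 h) (B.mem_edgeSet.2 h'))

lemma card_cycle_le_of_subsingleton {m : ℕ} [NeZero m] {J : Finset (Fin m)}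
    (hJ : {i | i ∉ J ∧ i + 1 ∉ J}.Subsingleton) : m ≤ 2 * #J + 1 := by
  have hsucc : #{i ∈ Jᶜ | i + 1 ∈ J} ≤ #J :=
    card_le_card_of_injOn (· + 1) (fun i hi => by simp_all) (add_left_injective 1).injOn
  have hrest : #{i ∈ Jᶜ | i + 1 ∉ J} ≤ 1 :=
    card_le_one.2 fun i hi j hj => hJ (by simpa using hi) (by simpa using hj)
  have hsplit := card_filter_add_card_filter_not (s := Jᶜ) (p := fun i => i + 1 ∈ J)
  have hcompl := card_compl_add_card J
  rw [Fintype.card_fin] at hcompl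
  omega

lemma not_rim_of_centre_inl [Fintype W] [DecidableRel A.Adj] {m : ℕ} [NeZero m] (hm : 2 < m)
    (hB : B.edgeSet.Subsingleton) {w : W} (hdeg : 2 * A.degree w + 1 < m) {g : Fin m ↪ W ⊕ U}
    (hc : ∀ i, (graphJoin A B).Adj (.inl w) (g i)) :
    ¬ ∀ i, (graphJoin A B).Adj (g i) (g (i + 1)) := by
  intro hg
  set J : Finset (Fin m) := {i | (g i).isLeft} with hJdef
  have hinr : ∀ i ∉ J, ∃ u, g i = .inr u := fun i hi => by simpa [hJdef, Sum.isRight_iff] using hi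
  have hJ : #J ≤ A.degree w := by
    rw [← card_neighborFinset_eq_degree, ← card_map g, ← card_map .inl (s := A.neighborFinset w)]
    refine card_le_card fun x hx => ?_
    obtain ⟨i, hi, rfl⟩ := mem_map.1 hx
    obtain ⟨v, hv⟩ := Sum.isLeft_iff.1 (mem_filter.1 hi).2
    have hadj := hc i
    rw [hv, graphJoin_adj_inl_inl] at hadj
    simpa [hv] using hadj
  have hpair : {i | i ∉ J ∧ i + 1 ∉ J}.Subsingleton := by
    rintro i ⟨hi, hi'⟩ j ⟨hj, hj'⟩
    obtain ⟨a, ha⟩ := hinr i hi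
    obtain ⟨a', ha'⟩ := hinr _ hi'
    obtain ⟨b, hb⟩ := hinr j hj
    obtain ⟨b', hb'⟩ := hinr _ hj'
    have hi_adj := hg i
    have hj_adj := hg j
    rw [ha, ha', graphJoin_adj_inr_inr] at hi_adj
    rw [hb, hb', graphJoin_adj_inr_inr] at hj_adj
    obtain ⟨rfl, -⟩ | ⟨rfl, rfl⟩ := Sym2.eq_iff.1 (hB hi_adj hj_adj)
    · exact g.injective (ha.trans hb.symm)
    · have hij := g.injective (ha.trans hb'.symm)
      have hji := g.injective (ha'.trans hb.symm)
      rw [← hji, add_assoc, left_eq_add] at hij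
      simp [Fin.ext_iff, Fin.val_add, Nat.mod_eq_of_lt hm] at hij
  have := card_cycle_le_of_subsingleton hpair
  omega

open scoped Fin.CommRing in
lemma apply_eq_of_forall_succ {m : ℕ} [NeZero m] {f : Fin m → β} {i₀ : Fin m}
    (hf : ∀ i ≠ i₀, i + 1 ≠ i₀ → f i = f (i + 1)) {i : Fin m} (hi : i ≠ i₀) :
    f i = f (i₀ + 1) := by
  have hne : ∀ j : ℕ, j + 1 < m → i₀ + 1 + (j : Fin m) ≠ i₀ := fun j hj h => by
    rw [add_assoc, add_eq_left, add_comm, ← Nat.cast_succ, Fin.natCast_eq_zero] at h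
    exact Nat.not_dvd_of_pos_of_lt j.succ_pos hj h
  have hconst : ∀ j : ℕ, j + 1 < m → f (i₀ + 1 + (j : Fin m)) = f (i₀ + 1) := by
    intro j hj
    induction j with
    | zero => simp
    | succ j ih =>
      have hstep := hne (j + 1) hj
      rw [Nat.cast_succ, ← add_assoc] at hstep ⊢
      rw [← hf _ (hne j (by omega)) hstep, ih (by omega)]
  have hi' : i₀ + 1 + ((i - i₀ - 1).val : Fin m) = i := by
    rw [Fin.cast_val_eq_self]; abel
  rw [← hi']
  refine hconst _ ((Nat.succ_le_of_lt (i - i₀ - 1).isLt).lt_of_ne fun h => hi ?_)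
  have h0 : (((i - i₀ - 1).val + 1 : ℕ) : Fin m) = 0 := by
    rw [Fin.natCast_eq_zero, ← Nat.succ_eq_add_one, h]
  rw [Nat.cast_succ, Fin.cast_val_eq_self, sub_add_cancel] at h0
  exact sub_eq_zero.1 h0

lemma exists_forall_ne_inl_of_centre_inr {m : ℕ} [NeZero m] (hB : B.edgeSet.Subsingleton) {u : U}
    {g : Fin m ↪ W ⊕ U} (hc : ∀ i, (graphJoin A B).Adj (.inr u) (g i)) :
    ∃ i₀, ∀ i ≠ i₀, ∃ w, g i = .inl w := by
  by_cases h : ∃ i₀ v, g i₀ = .inr v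
  · obtain ⟨i₀, v, hv⟩ := h
    refine ⟨i₀, fun i hi => ?_⟩
    rcases hgi : g i with w | v'
    · exact ⟨w, rfl⟩
    · have h₀ := hc i₀
      have h₁ := hc i
      rw [hv, graphJoin_adj_inr_inr] at h₀
      rw [hgi, graphJoin_adj_inr_inr] at h₁
      obtain rfl := eq_of_adj_of_edgeSet_subsingleton hB h₀ h₁
      exact absurd (g.injective (hgi.trans hv.symm)) hi
  · push Not at h
    refine ⟨0, fun i _ => ?_⟩
    rcases hgi : g i with w | v
    · exact ⟨w, rfl⟩
    · exact absurd hgi (h i v)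

lemma not_rim_of_centre_inr [Fintype W] [DecidableEq β] {κ : W → β}
    (hκ : ∀ w w', A.Adj w w' → κ w = κ w') {m : ℕ} [NeZero m] (hm : 1 < m)
    (hblock : ∀ b, #{w | κ w = b} + 1 < m) (hB : B.edgeSet.Subsingleton) {u : U}
    {g : Fin m ↪ W ⊕ U} (hc : ∀ i, (graphJoin A B).Adj (.inr u) (g i)) :
    ¬ ∀ i, (graphJoin A B).Adj (g i) (g (i + 1)) := by
  intro hg
  obtain ⟨i₀, hinl⟩ := exists_forall_ne_inl_of_centre_inr hB hc
  have hlabel : ∀ i ≠ i₀, i + 1 ≠ i₀ →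
      (g i).elim (some ∘ κ) (fun _ => none) = (g (i + 1)).elim (some ∘ κ) fun _ => none := by
    intro i hi hi'
    obtain ⟨w, hw⟩ := hinl i hi
    obtain ⟨w', hw'⟩ := hinl _ hi'
    have hadj := hg i
    rw [hw, hw', graphJoin_adj_inl_inl] at hadj
    simp [hw, hw', hκ _ _ hadj]
  obtain ⟨w₀, hw₀⟩ := hinl (i₀ + 1) (by simp [hm.ne'])
  have hcard : #(univ.erase i₀) ≤ #{w | κ w = κ w₀} := by
    rw [← card_map g, ← card_map .inl (s := {w | κ w = κ w₀})]
    refine card_le_card fun x hx => ?_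
    obtain ⟨i, hi, rfl⟩ := mem_map.1 hx
    obtain ⟨w, hw⟩ := hinl i (ne_of_mem_erase hi)
    have hw_label := apply_eq_of_forall_succ hlabel (ne_of_mem_erase hi)
    simpa [hw, hw₀] using hw_label
  rw [card_erase_of_mem (mem_univ _), card_univ, Fintype.card_fin] at hcard
  have := hblock (κ w₀)
  omega

theorem not_containsCopy_wheelGraph_graphJoin [Fintype W] [DecidableRel A.Adj] [DecidableEq β]
    {m : ℕ} (hm : 2 < m) (hdeg : ∀ w, 2 * A.degree w + 1 < m) {κ : W → β}
    (hκ : ∀ w w', A.Adj w w' → κ w = κ w') (hblock : ∀ b, #{w | κ w = b} + 1 < m)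
    (hB : B.edgeSet.Subsingleton) : ¬ ContainsCopy (wheelGraph (m + 1)) (graphJoin A B) := by
  have : NeZero m := ⟨by omega⟩
  rw [containsCopy_wheelGraph_iff (by omega)]
  rintro ⟨w | u, g, hc, hg⟩
  · exact not_rim_of_centre_inl hm hB (hdeg w) hc hg
  · exact not_rim_of_centre_inr hκ (by omega) hblock hB hc hg

lemma of_one_mulVec_const {X Y : Type*} [Fintype Y] (r : ℝ) :
    (of fun (_ : X) (_ : Y) => (1 : ℝ)) *ᵥ (fun _ => r) = fun _ => Fintype.card Y * r := by
  ext
  simp [mulVec, dotProduct]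

lemma adjMatrix_mulVec_const_eq [Fintype W] [DecidableRel A.Adj] (r : ℝ) :
    A.adjMatrix ℝ *ᵥ (fun _ => r) = fun w => A.degree w * r := by
  ext
  simp

lemma adjForm_graphJoin [Fintype W] [Fintype U] [DecidableRel A.Adj] [DecidableRel B.Adj]
    [DecidableRel (graphJoin A B).Adj] (p q : ℝ) :
    Sum.elim (fun _ => p) (fun _ => q) ⬝ᵥ
        (graphJoin A B).adjMatrix ℝ *ᵥ Sum.elim (fun _ => p) (fun _ => q) =
      (∑ w, A.degree w : ℕ) * p ^ 2 + 2 * (Fintype.card W * Fintype.card U) * (p * q) +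
        (∑ u, B.degree u : ℕ) * q ^ 2 := by
  have hblocks : (graphJoin A B).adjMatrix ℝ =
      fromBlocks (A.adjMatrix ℝ) (of fun _ _ => 1) (of fun _ _ => 1) (B.adjMatrix ℝ) := by
    ext (i | i) (j | j) <;> simp [adjMatrix_apply]
  rw [hblocks, fromBlocks_mulVec, sumElim_dotProduct_sumElim]
  simp only [Sum.elim_comp_inl, Sum.elim_comp_inr, of_one_mulVec_const, adjMatrix_mulVec_const_eq,
    dotProduct, Pi.add_apply, mul_add, sum_add_distrib, ← mul_sum, ← sum_mul, sum_const, card_univ,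
    nsmul_eq_mul, Nat.cast_sum]
  ring

end Join

section Construction

variable {V W : Type*} {G : SimpleGraph V} {H : SimpleGraph W}

lemma adjForm_le_lam1_of_iso [Fintype V] [DecidableRel G.Adj] {n : ℕ} {K : SimpleGraph (Fin n)}
    (φ : G ≃g K) (y : V → ℝ) :
    y ⬝ᵥ G.adjMatrix ℝ *ᵥ y ≤ lam1 K * ∑ v, y v ^ 2 := by
  classical
  have hsum : ∑ i, (y ∘ φ.symm) i ^ 2 = ∑ v, y v ^ 2 := φ.symm.toEquiv.sum_comp fun v => y v ^ 2
  have hform : y ∘ φ.symm ⬝ᵥ K.adjMatrix ℝ *ᵥ (y ∘ φ.symm) = y ⬝ᵥ G.adjMatrix ℝ *ᵥ y := by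
    rw [← φ.reindex_adjMatrix ℝ, reindex_apply, submatrix_mulVec_equiv]
    refine (comp_equiv_dotProduct_comp_equiv (e := φ.symm.toEquiv) ..).trans ?_
    congr 2
    ext
    simp
  simpa only [hsum, hform] using adjForm_le_lam1 K (y ∘ φ.symm)

lemma isRegularOfDegree_sum {d : ℕ} [LocallyFinite G] [LocallyFinite H] [LocallyFinite (G ⊕g H)]
    (hG : G.IsRegularOfDegree d) (hH : H.IsRegularOfDegree d) : (G ⊕g H).IsRegularOfDegree d := by
  rintro (v | w)
  · have hmap : (G ⊕g H).neighborFinset (.inl v) = (G.neighborFinset v).map .inl := by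
      ext (x | x) <;> simp
    rw [← card_neighborFinset_eq_degree, hmap, card_map, card_neighborFinset_eq_degree, hG v]
  · have hmap : (G ⊕g H).neighborFinset (.inr w) = (H.neighborFinset w).map .inr := by
      ext (x | x) <;> simp
    rw [← card_neighborFinset_eq_degree, hmap, card_map, card_neighborFinset_eq_degree, hH w]

lemma isRegularOfDegree_bot_boxProd [Finite V] {d : ℕ} [LocallyFinite H]
    [LocallyFinite ((⊥ : SimpleGraph V) □ H)] (hH : H.IsRegularOfDegree d) :
    ((⊥ : SimpleGraph V) □ H).IsRegularOfDegree d := by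
  classical
  have := Fintype.ofFinite V
  intro x
  rw [degree_boxProd, bot_degree, zero_add, hH]

lemma isRegularOfDegree_completeBipartiteGraph (V : Type*) [Fintype V]
    [LocallyFinite (completeBipartiteGraph V V)] :
    (completeBipartiteGraph V V).IsRegularOfDegree (Fintype.card V) := by
  rintro (v | v)
  · have hmap : (completeBipartiteGraph V V).neighborFinset (.inl v) = univ.map .inr := by
      ext (x | x) <;> simp
    rw [← card_neighborFinset_eq_degree, hmap, card_map, card_univ]
  · have hmap : (completeBipartiteGraph V V).neighborFinset (.inr v) = univ.map .inl := by
      ext (x | x) <;> simp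
    rw [← card_neighborFinset_eq_degree, hmap, card_map, card_univ]

/-- Disjoint copies of `K_k` and of `K_{k-1,k-1}`, a `(k - 1)`-regular graph all of whose
components have at most `2k - 2` vertices. -/
def regularBlocks (k a b : ℕ) :
    SimpleGraph (Fin a × Fin k ⊕ Fin b × (Fin (k - 1) ⊕ Fin (k - 1))) :=
  (⊥ □ ⊤) ⊕g (⊥ □ completeBipartiteGraph (Fin (k - 1)) (Fin (k - 1)))

lemma isRegularOfDegree_regularBlocks (k a b : ℕ) [LocallyFinite (regularBlocks k a b)] :
    (regularBlocks k a b).IsRegularOfDegree (k - 1) := by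
  classical
  have htop := IsRegularOfDegree.top (V := Fin k)
  have hbip := isRegularOfDegree_completeBipartiteGraph (Fin (k - 1))
  rw [Fintype.card_fin] at htop hbip
  intro v
  unfold regularBlocks at *
  convert isRegularOfDegree_sum (isRegularOfDegree_bot_boxProd (V := Fin a) htop)
    (isRegularOfDegree_bot_boxProd (V := Fin b) hbip) v

/-- The block of `regularBlocks k a b` containing a given vertex. -/
def blockLabel {k a b : ℕ} : Fin a × Fin k ⊕ Fin b × (Fin (k - 1) ⊕ Fin (k - 1)) → Fin a ⊕ Fin b :=
  Sum.map Prod.fst Prod.fst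

lemma blockLabel_eq_of_adj {k a b : ℕ} {v w} (h : (regularBlocks k a b).Adj v w) :
    blockLabel v = blockLabel w := by
  rcases v with v | v <;> rcases w with w | w
  · exact congrArg Sum.inl ((boxProd_adj.1 h).resolve_left (·.1)).2
  · cases h
  · cases h
  · exact congrArg Sum.inr ((boxProd_adj.1 h).resolve_left (·.1)).2

lemma card_blockLabel_eq_le {k a b : ℕ} (hk : 2 ≤ k) (c : Fin a ⊕ Fin b) :
    #{v : Fin a × Fin k ⊕ Fin b × (Fin (k - 1) ⊕ Fin (k - 1)) | blockLabel v = c} ≤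
      2 * k - 2 := by
  rcases c with c | c
  · have hsub : univ.filter (blockLabel (k := k) (a := a) (b := b) · = .inl c) ⊆
        univ.image fun j => Sum.inl (c, j) := by
      rintro (⟨c', j⟩ | v) <;> simp [blockLabel, eq_comm]
    have := (card_le_card hsub).trans card_image_le
    rw [card_univ, Fintype.card_fin] at this
    omega
  · have hsub : univ.filter (blockLabel (k := k) (a := a) (b := b) · = .inr c) ⊆
        univ.image fun j => Sum.inr (c, j) := by
      rintro (v | ⟨c', j⟩) <;> simp [blockLabel, eq_comm]
    have := (card_le_card hsub).trans card_image_le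
    rw [card_univ, Fintype.card_sum, Fintype.card_fin] at this
    omega

lemma sum_degree_edge [Fintype V] {s t : V} [DecidableRel (edge s t).Adj] (hst : s ≠ t) :
    ∑ v, (edge s t).degree v = 2 := by
  classical
  rw [sum_degrees_eq_twice_card_edges, Nat.mul_eq_left two_ne_zero, card_eq_one]
  exact ⟨s(s, t), by rw [← coe_inj, coe_edgeFinset, edgeSet_edge_of_ne hst, coe_singleton]⟩

lemma exists_wheelFree_adjForm {k a b r n : ℕ} (hk : 3 ≤ k) (hr : 2 ≤ r)
    (hn : a * k + b * (2 * (k - 1)) + r = n) :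
    ∃ H : SimpleGraph (Fin n), WheelFree (2 * k + 1) H ∧ ∀ p q : ℝ,
      (n - r) * (k - 1) * p ^ 2 + 2 * ((n - r) * r) * (p * q) + 2 * q ^ 2 ≤
        lam1 H * ((n - r) * p ^ 2 + r * q ^ 2) := by
  classical
  let B := edge (⟨0, by omega⟩ : Fin r) ⟨1, by omega⟩
  have hst : (⟨0, by omega⟩ : Fin r) ≠ ⟨1, by omega⟩ := by simp
  have hcard : Fintype.card (Fin a × Fin k ⊕ Fin b × (Fin (k - 1) ⊕ Fin (k - 1))) + r = n := by
    simpa [two_mul] using hn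
  let e : (Fin a × Fin k ⊕ Fin b × (Fin (k - 1) ⊕ Fin (k - 1))) ⊕ Fin r ≃ Fin n :=
    Fintype.equivFinOfCardEq (by rw [Fintype.card_sum, Fintype.card_fin, hcard])
  let φ := Iso.map e (graphJoin (regularBlocks k a b) B)
  have hreg := isRegularOfDegree_regularBlocks k a b
  refine ⟨(graphJoin (regularBlocks k a b) B).map e, ?_, fun p q => ?_⟩
  · rintro ⟨f, hf⟩
    refine not_containsCopy_wheelGraph_graphJoin (m := 2 * k) (by omega)
      (fun w => ?_) (fun _ _ => blockLabel_eq_of_adj) (fun c => ?_)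
      (edgeSet_edge_of_ne hst ▸ Set.subsingleton_singleton)
      ⟨f.trans e.symm.toEmbedding, fun i j hij => φ.symm.map_rel_iff.2 (hf i j hij)⟩
    · have := hreg w
      omega
    · have := card_blockLabel_eq_le (k := k) (by omega) c
      omega
  · have h := adjForm_le_lam1_of_iso φ (Sum.elim (fun _ => p) fun _ => q)
    rw [adjForm_graphJoin, sum_degree_edge hst, sum_congr rfl fun w _ => hreg w] at h
    have hk' : ((k - 1 : ℕ) : ℝ) = k - 1 := by rw [Nat.cast_sub (by omega), Nat.cast_one]
    have hcard' := congrArg (Nat.cast (R := ℝ)) hcard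
    rw [Nat.cast_add, ← eq_sub_iff_add_eq] at hcard'
    simpa only [sum_const, card_univ, smul_eq_mul, Nat.cast_mul, hcard', hk', Fintype.card_fin,
      Fintype.sum_sum_type, Sum.elim_inl, Sum.elim_inr, nsmul_eq_mul, Nat.cast_ofNat] using h

lemma add_one_le_of_adjForm_test {l r k lam : ℝ} (hl : 0 < l) (hlam : 0 < lam)
    (hlam_le : lam ≤ 2 * l)
    (htest : l * (k - 1) * lam ^ 2 + 2 * (l * r) * (lam * l) + 2 * l ^ 2 ≤
      lam * (l * lam ^ 2 + r * l ^ 2)) :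
    l * r + 1 ≤ lam * (lam - (k - 1)) := by
  have hfactor : l * (lam * (l * r + 1)) ≤ l * (lam * (lam * (lam - (k - 1)))) := by
    nlinarith
  exact le_of_mul_le_mul_left (le_of_mul_le_mul_left hfactor hl) hlam

lemma exists_wheelFree_near_balanced {k n : ℕ} (hk : 3 ≤ k) (hn : 4 * k ^ 2 ≤ n) :
    ∃ H : SimpleGraph (Fin n), WheelFree (2 * k + 1) H ∧ 0 < lam1 H ∧
      ∃ l r : ℕ, l + r = n ∧ l ≤ r + 2 ∧ r ≤ l + 2 ∧
        (l : ℝ) * r + 1 ≤ lam1 H * (lam1 H - (k - 1)) := by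
  have hk2 : 9 ≤ k ^ 2 := by nlinarith
  have : NeZero n := ⟨by omega⟩
  obtain ⟨a, b, hab⟩ := Nat.exists_add_mul_eq_of_gcd_dvd_of_mul_pred_le k (k - 1) ((n + 2) / 4)
    (by rw [(Nat.coprime_self_sub_right (by omega)).2 (Nat.coprime_one_right k)]; exact one_dvd _)
    ((Nat.mul_le_mul k.pred_le ((k - 1).pred_le.trans k.pred_le)).trans (by rw [← sq]; omega))
  obtain ⟨r, hr⟩ := Nat.exists_eq_add_of_le (show 2 * ((n + 2) / 4) ≤ n by omega)
  obtain ⟨H, hfree, htest⟩ := exists_wheelFree_adjForm (a := 2 * a) (b := b) (r := r) (n := n) hk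
    (by omega) (by linear_combination 2 * hab - hr)
  have hsum : (2 * ((n + 2) / 4) : ℕ) = (n - r : ℝ) := by
    rw [eq_sub_iff_add_eq]; exact_mod_cast hr.symm
  have hl : (n : ℝ) ≤ 2 * (n - r) + 1 := by rw [← hsum]; norm_cast; omega
  have hn' : (2 : ℝ) ≤ n := by norm_cast; omega
  have hk' : (3 : ℝ) ≤ k := by norm_cast
  have hlam : 0 < lam1 H := by
    have h := htest 1 1
    have : 0 ≤ (n - r) * ((k : ℝ) - 1) := mul_nonneg (by linarith) (by linarith)
    have : 0 ≤ (n - r) * (r : ℝ) := mul_nonneg (by linarith) r.cast_nonneg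
    exact pos_of_mul_pos_left (b := (n : ℝ)) (by linarith) (by linarith)
  refine ⟨H, hfree, hlam, 2 * ((n + 2) / 4), r, hr.symm, by omega, by omega, ?_⟩
  rw [hsum]
  exact add_one_le_of_adjForm_test (by linarith) hlam ((lam1_le H).trans (by linarith))
    (htest (lam1 H) (n - r))

end Construction

/-! ### Path systems inside one side -/

section PathSystem

variable {V : Type*} {G : SimpleGraph V} {R S : Finset V} {Ps Qs : List (List V)}

lemma IsPathSystem.mono (hRS : R ⊆ S) (hQs : IsPathSystem G R Qs) : IsPathSystem G S Qs :=
  ⟨hQs.nil_notMem, hQs.isChain, hQs.nodup, fun q hq => hRS (hQs.mem q hq)⟩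

variable [DecidableEq V]

lemma IsPathSystem.append (hPs : IsPathSystem G R Ps)
    (hQs : IsPathSystem G (R \ Ps.flatten.toFinset) Qs) : IsPathSystem G R (Ps ++ Qs) where
  nil_notMem := by simp [hPs.nil_notMem, hQs.nil_notMem]
  isChain Q hQ := (List.mem_append.1 hQ).elim (hPs.isChain Q) (hQs.isChain Q)
  nodup := by
    rw [List.flatten_append]
    refine hPs.nodup.append hQs.nodup fun q hq hq' => ?_
    simpa [List.mem_flatten.1 hq] using (mem_sdiff.1 (hQs.mem q hq')).2
  mem q hq := by
    rw [List.flatten_append, List.mem_append] at hq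
    exact hq.elim (hPs.mem q) fun hq => sdiff_subset (hQs.mem q hq)

variable [Fintype V] [DecidableRel G.Adj] {Bad : Finset V} {D : ℕ}

variable (G) in
/-- The vertices of `R` with at least `j` neighbours inside `R`. -/
def highDegree (R : Finset V) (j : ℕ) : Finset V := {w ∈ R | j ≤ #(G.neighborFinset w ∩ R)}

lemma highDegree_zero : highDegree G R 0 = R := by simp [highDegree]

lemma highDegree_anti {i j : ℕ} (hij : i ≤ j) : highDegree G R j ⊆ highDegree G R i :=
  monotone_filter_right _ fun _ _ => hij.trans

lemma exists_path_avoiding (hD : ∀ w ∈ R, #(G.neighborFinset w ∩ R) ≤ D) {j : ℕ} (hj : j ≤ 2)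
    (hlarge : (D + 1) * #Bad < #(highDegree G R j)) :
    ∃ Q : List V, IsPathSystem G (R \ Bad) [Q] ∧ Q.length = j + 1 := by
  have hclosed : #(Bad ∪ (Bad ∩ R).biUnion fun b => G.neighborFinset b ∩ R) ≤ (D + 1) * #Bad := by
    have hunion := card_biUnion_le_card_mul (Bad ∩ R) (fun b => G.neighborFinset b ∩ R) D
      fun b hb => hD b (mem_inter.1 hb).2
    have hmul := Nat.mul_le_mul_right D (card_le_card (inter_subset_left (s₁ := Bad) (s₂ := R)))
    have := card_union_le Bad ((Bad ∩ R).biUnion fun b => G.neighborFinset b ∩ R)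
    linarith
  obtain ⟨w, hw, hw_avoid⟩ := exists_mem_notMem_of_card_lt_card (hclosed.trans_lt hlarge)
  obtain ⟨hwR, hwj⟩ := mem_filter.1 hw
  simp only [mem_union, mem_biUnion, mem_inter, not_or, not_exists, not_and,
    mem_neighborFinset] at hw_avoid
  obtain ⟨hwBad, hwN⟩ := hw_avoid
  have hnbr : ∀ a ∈ G.neighborFinset w ∩ R, G.Adj w a ∧ a ∈ R ∧ a ∉ Bad := by
    intro a ha
    rw [mem_inter, mem_neighborFinset] at ha
    exact ⟨ha.1, ha.2, fun haB => hwN a ⟨haB, ha.2⟩ ha.1.symm hwR⟩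
  interval_cases j
  · exact ⟨[w], ⟨by simp, by simp, by simp, by simp [hwR, hwBad]⟩, rfl⟩
  · obtain ⟨a, ha⟩ := card_pos.1 hwj
    obtain ⟨hwa, ha'⟩ := hnbr a ha
    exact ⟨[w, a], ⟨by simp, by simpa, by simpa using hwa.ne, by simp [hwR, hwBad, ha']⟩, rfl⟩
  · obtain ⟨a, ha, b, hb, hab⟩ := one_lt_card.1 hwj
    obtain ⟨hwa, ha'⟩ := hnbr a ha
    obtain ⟨hwb, hb'⟩ := hnbr b hb
    exact ⟨[a, w, b], ⟨by simp, by simp [hwa.symm, hwb], by simp [hwa.ne', hwb.ne, hab],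
      by simp [hwR, hwBad, ha', hb']⟩, rfl⟩

lemma exists_pathSystem_avoiding (hD : ∀ w ∈ R, #(G.neighborFinset w ∩ R) ≤ D) {js : List ℕ}
    (hjs : ∀ j ∈ js, j ≤ 2 ∧
      (D + 1) * (#Bad + (js.map (· + 1)).sum) < #(highDegree G R j)) :
    ∃ Qs, IsPathSystem G (R \ Bad) Qs ∧ Qs.length = js.length ∧
      Qs.flatten.length = (js.map (· + 1)).sum := by
  induction js with
  | nil => exact ⟨[], ⟨by simp, by simp, by simp, by simp⟩, rfl, rfl⟩
  | cons j js ih =>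
    obtain ⟨Qs, hQs, hlen, hsum⟩ := ih fun i hi =>
      ⟨(hjs i (.tail _ hi)).1, (Nat.mul_le_mul_left _ (by simp)).trans_lt (hjs i (.tail _ hi)).2⟩
    have hcard : #(Bad ∪ Qs.flatten.toFinset) ≤ #Bad + ((j :: js).map (· + 1)).sum := by
      have := card_union_le Bad Qs.flatten.toFinset
      have := Qs.flatten.toFinset_card_le
      simp only [List.map_cons, List.sum_cons]
      omega
    obtain ⟨hj, hlarge⟩ := hjs j (.head _)
    obtain ⟨Q, hQ, hQlen⟩ :=
      exists_path_avoiding hD hj ((Nat.mul_le_mul_left _ hcard).trans_lt hlarge)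
    refine ⟨Qs ++ [Q], hQs.append (by rwa [sdiff_sdiff_left]), by simp [hlen], ?_⟩
    simp [hsum, hQlen, add_comm]

lemma card_biUnion_insert_sdiff_neighborFinset_le {us : Finset V} {v : V} {M : ℕ}
    (hM : ∀ u ∈ insert v us, #(R \ G.neighborFinset u) ≤ M) :
    #((insert v us).biUnion fun u => R \ G.neighborFinset u) ≤ (#us + 1) * M :=
  (card_biUnion_le_card_mul _ _ _ hM).trans (Nat.mul_le_mul_right _ (card_insert_le v us))

lemma adj_of_notMem_biUnion_sdiff {us : Finset V} {q : V} (hqR : q ∈ R)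
    (hq : q ∉ us.biUnion fun u => R \ G.neighborFinset u) {u : V} (hu : u ∈ us) : G.Adj u q := by
  by_contra h
  exact hq (mem_biUnion.2 ⟨u, hu, by simp [hqR, h]⟩)

theorem containsCopy_wheelGraph_of_highDegree (hD : ∀ w ∈ R, #(G.neighborFinset w ∩ R) ≤ D)
    {m M : ℕ} (hm : 1 < m) {v : V} {us : Finset V} (hvus : us ⊆ G.neighborFinset v)
    (hM : ∀ u ∈ insert v us, #(R \ G.neighborFinset u) ≤ M) (hPs : IsPathSystem G R Ps)
    (hPs_adj : ∀ u ∈ insert v us, ∀ q ∈ Ps.flatten, G.Adj u q) {js : List ℕ}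
    (hcard : #us = Ps.length + js.length)
    (hrim : #us + Ps.flatten.length + (js.map (· + 1)).sum = m)
    (hjs : ∀ j ∈ js, j ≤ 2 ∧ (D + 1) * ((#us + 1) * M + m) < #(highDegree G R j)) :
    ContainsCopy (wheelGraph (m + 1)) G := by
  set Missed := (insert v us).biUnion fun u => R \ G.neighborFinset u
  have hBad : #(Ps.flatten.toFinset ∪ Missed) + (js.map (· + 1)).sum ≤ (#us + 1) * M + m := by
    have := card_union_le Ps.flatten.toFinset Missed
    have := Ps.flatten.toFinset_card_le
    have : #Missed ≤ _ := card_biUnion_insert_sdiff_neighborFinset_le hM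
    omega
  obtain ⟨Qs, hQs, hlen, hsum⟩ := exists_pathSystem_avoiding hD fun j hj =>
    ⟨(hjs j hj).1, (Nat.mul_le_mul_left _ hBad).trans_lt (hjs j hj).2⟩
  have hadj : ∀ u ∈ insert v us, ∀ q ∈ (Ps ++ Qs).flatten, G.Adj u q := by
    intro u hu q hq
    rw [List.flatten_append, List.mem_append] at hq
    rcases hq with hq | hq
    · exact hPs_adj u hu q hq
    · have hq' := hQs.mem q hq
      rw [mem_sdiff, notMem_union] at hq'
      exact adj_of_notMem_biUnion_sdiff hq'.1 hq'.2.2 hu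
  have hPQ : IsPathSystem G R (Ps ++ Qs) :=
    hPs.append (hQs.mono (sdiff_subset_sdiff subset_rfl subset_union_left))
  refine hPQ.containsCopy_wheelGraph hm (c := v) (us := us) ?_ ?_
    (fun u hu => hadj u (mem_insert_of_mem hu)) (fun u hu => by simpa using hvus hu)
    (hadj v (mem_insert_self v us))
  · rw [List.length_append, hlen, hcard]
  · rw [List.flatten_append, List.length_append, hsum, ← add_assoc, hrim]

theorem containsCopy_wheelGraph_of_card_le {k M : ℕ} (hk : 0 < k) {v : V} {us : Finset V}
    (hvus : us ⊆ G.neighborFinset v) (hus : #us = k)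
    (hM : ∀ u ∈ insert v us, #(R \ G.neighborFinset u) ≤ M) (hR : (k + 1) * M + k ≤ #R) :
    ContainsCopy (wheelGraph (2 * k + 1)) G := by
  have hMissed := card_biUnion_insert_sdiff_neighborFinset_le hM
  rw [hus] at hMissed
  obtain ⟨B, hB, hBcard⟩ := exists_subset_card_eq
    (show k ≤ #(R \ (insert v us).biUnion fun u => R \ G.neighborFinset u) by
      have := le_card_sdiff ((insert v us).biUnion fun u => R \ G.neighborFinset u) R
      omega)
  have hadj : ∀ u ∈ insert v us, ∀ b ∈ B, G.Adj u b := fun u hu b hb =>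
    adj_of_notMem_biUnion_sdiff (mem_sdiff.1 (hB hb)).1 (mem_sdiff.1 (hB hb)).2 hu
  exact containsCopy_wheelGraph_of_biclique hk hus hBcard
    (fun u hu => hadj u (mem_insert_of_mem hu)) (fun u hu => by simpa using hvus hu)
    (hadj v (mem_insert_self v us))

lemma exists_disjoint_edges (hdeg : ∀ w ∈ R, #(G.neighborFinset w ∩ R) ≤ 1)
    (hsum : 2 < ∑ w ∈ R, #(G.neighborFinset w ∩ R)) :
    ∃ a b c d, IsPathSystem G R [[a, b], [c, d]] := by
  have hunique : ∀ {a b c}, a ∈ R → b ∈ R → c ∈ R → G.Adj a b → G.Adj a c → b = c :=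
    fun ha hb hc hab hac => card_le_one.1 (hdeg _ ha) _ (by simp [*]) _ (by simp [*])
  have hcard : 2 < #(highDegree G R 1) := by
    refine hsum.trans_le ?_
    rw [highDegree, card_filter]
    refine sum_le_sum fun w hw => ?_
    have := hdeg w hw
    split_ifs <;> omega
  have hnbr : ∀ w ∈ highDegree G R 1, w ∈ R ∧ ∃ a ∈ R, G.Adj w a := by
    intro w hw
    obtain ⟨hwR, hw1⟩ := mem_filter.1 hw
    obtain ⟨a, ha⟩ := card_pos.1 hw1
    rw [mem_inter, mem_neighborFinset] at ha
    exact ⟨hwR, a, ha.2, ha.1⟩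
  obtain ⟨a, ha⟩ := card_pos.1 (show 0 < #(highDegree G R 1) by omega)
  obtain ⟨haR, b, hbR, hab⟩ := hnbr a ha
  obtain ⟨c, hc, hcab⟩ := exists_mem_notMem_of_card_lt_card (card_le_two.trans_lt hcard)
  obtain ⟨hcR, d, hdR, hcd⟩ := hnbr c hc
  simp only [mem_insert, mem_singleton, not_or] at hcab
  have hda : d ≠ a := by
    rintro rfl
    exact hcab.2 (hunique haR hcR hbR hcd.symm hab)
  have hdb : d ≠ b := by
    rintro rfl
    exact hcab.1 (hunique hbR hcR haR hcd.symm hab.symm)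
  refine ⟨a, b, c, d, by simp, by simp [hab, hcd], ?_, by simp [*]⟩
  simp [hab.ne, hcd.ne, Ne.symm hcab.1, Ne.symm hcab.2, hda.symm, hdb.symm]

lemma exists_isPathSystem_of_two_lt_sum (hsum : 2 < ∑ w ∈ R, #(G.neighborFinset w ∩ R)) :
    ∃ Ps, IsPathSystem G R Ps ∧ Ps.flatten.length = Ps.length + 2 ∧ Ps.length ≤ 2 := by
  by_cases h : ∃ w ∈ R, 1 < #(G.neighborFinset w ∩ R)
  · obtain ⟨w, hw, hw2⟩ := h
    obtain ⟨a, ha, b, hb, hab⟩ := one_lt_card.1 hw2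
    rw [mem_inter, mem_neighborFinset] at ha hb
    exact ⟨[[a, w, b]], ⟨by simp, by simp [ha.1.symm, hb.1], by simp [ha.1.ne', hb.1.ne, hab],
      by simp [*]⟩, by simp, by simp⟩
  · push Not at h
    obtain ⟨a, b, c, d, hPs⟩ := exists_disjoint_edges h hsum
    exact ⟨_, hPs, rfl, le_rfl⟩

end PathSystem

/-! ### Local sparseness -/

section LocallySparse

lemma eventually_extremalNumber_succ_le {ε : ℝ} (hε : 0 < ε) (t : ℕ) :
    ∀ᶠ n : ℕ in atTop, (extremalNumber (n + 1) (completeEquipartiteGraph 2 t) : ℝ) ≤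
      extremalNumber n (completeEquipartiteGraph 2 t) + ε * (n + 1) := by
  filter_upwards [(tendsto_add_atTop_nat 1).eventually
    (eventually_completeEquipartiteGraph_isContained_of_minDegree hε 1 t)] with n hn
  have hbound := extremalNumber_le_iff_of_nonneg (V := Fin (n + 1)) (completeEquipartiteGraph 2 t)
    (m := (extremalNumber n (completeEquipartiteGraph 2 t) + ε * (n + 1) : ℝ)) (by positivity)
  rw [Fintype.card_fin] at hbound
  refine hbound.2 fun G _ hfree => ?_
  obtain ⟨v, hv⟩ := G.exists_minimal_degree_vertex
  have hdeg : (G.degree v : ℝ) ≤ ε * (n + 1) := by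
    by_contra! hlt
    refine hfree (hn ?_)
    rw [hv]
    push_cast
    linarith
  have hdelete := card_edgeFinset_deleteIncidenceSet_le_extremalNumber hfree v
  rw [card_edgeFinset_deleteIncidenceSet, Fintype.card_fin, Nat.add_sub_cancel,
    tsub_le_iff_right] at hdelete
  have : (#G.edgeFinset : ℝ) ≤ extremalNumber n (completeEquipartiteGraph 2 t) + G.degree v :=
    mod_cast hdelete
  linarith

theorem exists_extremalNumber_le {ε : ℝ} (hε : 0 < ε) (t : ℕ) :
    ∃ C : ℝ, ∀ n : ℕ,
      (extremalNumber n (completeEquipartiteGraph 2 t) : ℝ) ≤ ε * n ^ 2 + C := by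
  obtain ⟨N, hN⟩ := eventually_atTop.1 (eventually_extremalNumber_succ_le hε t)
  refine ⟨∑ m ∈ range (N + 1), (extremalNumber m (completeEquipartiteGraph 2 t) : ℝ),
    fun n => ?_⟩
  rcases le_total n N with hn | hn
  · have := single_le_sum (f := fun m => (extremalNumber m (completeEquipartiteGraph 2 t) : ℝ))
      (fun _ _ => by positivity) (mem_range.2 (Nat.lt_succ_of_le hn))
    nlinarith [sq_nonneg (n : ℝ)]
  · induction n, hn using Nat.le_induction with
    | base =>
      have := single_le_sum (f := fun m => (extremalNumber m (completeEquipartiteGraph 2 t) : ℝ))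
        (fun _ _ => by positivity) (mem_range.2 N.lt_succ_self)
      nlinarith [sq_nonneg (N : ℝ)]
    | succ n hn ih =>
      have := hN n hn
      push_cast
      nlinarith [n.cast_nonneg (α := ℝ)]

variable {V : Type*} {G : SimpleGraph V}

lemma sum_card_neighborFinset_inter [Fintype V] [DecidableEq V] [DecidableRel G.Adj] (v : V) :
    ∑ a ∈ G.neighborFinset v, #(G.neighborFinset a ∩ G.neighborFinset v) =
      2 * #(G.induce (G.neighborSet v)).edgeFinset := by
  rw [← sum_degrees_eq_twice_card_edges, sum_subtype (p := (· ∈ G.neighborSet v)) _ (by simp)]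
  refine sum_congr rfl fun a _ => ?_
  rw [degree, ← card_map (.subtype _), map_neighborFinset_induce, neighborFinset_def _ v]

lemma containsCopy_wheelGraph_of_induce_neighborSet {k : ℕ} (hk : 0 < k) {v : V}
    (h : completeEquipartiteGraph 2 k ⊑ G.induce (G.neighborSet v)) :
    ContainsCopy (wheelGraph (2 * k + 1)) G := by
  classical
  obtain ⟨f⟩ := h
  have hf : ∀ i, Function.Injective fun j => (f (i, j) : V) := fun i j j' hjj => by
    simpa using f.injective (Subtype.ext hjj)
  refine containsCopy_wheelGraph_of_biclique hk (c := v) (A := univ.map ⟨_, hf 0⟩)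
    (B := univ.map ⟨_, hf 1⟩) (by simp) (by simp) ?_ ?_ ?_
  · simp only [mem_map, mem_univ, true_and, Function.Embedding.coeFn_mk]
    rintro _ ⟨i, rfl⟩ _ ⟨j, rfl⟩
    exact f.toHom.map_adj (by simp)
  · simp only [mem_map, mem_univ, true_and, Function.Embedding.coeFn_mk]
    rintro _ ⟨i, rfl⟩
    exact (f (0, i)).2
  · simp only [mem_map, mem_univ, true_and, Function.Embedding.coeFn_mk]
    rintro _ ⟨i, rfl⟩
    exact (f (1, i)).2

theorem exists_sum_card_neighborFinset_inter_le {k : ℕ} (hk : 0 < k) {η : ℝ} (hη : 0 < η) :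
    ∃ N : ℕ, ∀ n, N ≤ n → ∀ (G : SimpleGraph (Fin n)) [DecidableRel G.Adj],
      WheelFree (2 * k + 1) G → ∀ v,
        ∑ a ∈ G.neighborFinset v, (#(G.neighborFinset a ∩ G.neighborFinset v) : ℝ) ≤
          η * n ^ 2 := by
  obtain ⟨C, hex⟩ := exists_extremalNumber_le (show 0 < η / 4 by positivity) k
  obtain ⟨N, hN⟩ := exists_nat_gt (4 * C / η)
  refine ⟨N, fun n hn G _ hG v => ?_⟩
  have hedges := card_edgeFinset_le_extremalNumber (H := completeEquipartiteGraph 2 k)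
    fun h => hG (containsCopy_wheelGraph_of_induce_neighborSet (v := v) hk h)
  have hdeg : (Fintype.card (G.neighborSet v) : ℝ) ≤ n := by
    rw [G.card_neighborSet_eq_degree]
    exact_mod_cast (G.degree_lt_card_verts v).le.trans_eq (Fintype.card_fin n)
  rw [div_lt_iff₀ hη] at hN
  have hn' : (N : ℝ) ≤ n ^ 2 := mod_cast hn.trans (Nat.le_self_pow two_ne_zero n)
  have hC' : 4 * C ≤ η * n ^ 2 := by nlinarith
  calc ∑ a ∈ G.neighborFinset v, (#(G.neighborFinset a ∩ G.neighborFinset v) : ℝ)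
      = 2 * #(G.induce (G.neighborSet v)).edgeFinset := mod_cast sum_card_neighborFinset_inter v
    _ ≤ 2 * extremalNumber (Fintype.card (G.neighborSet v)) (completeEquipartiteGraph 2 k) := by
        gcongr
    _ ≤ 2 * (η / 4 * Fintype.card (G.neighborSet v) ^ 2 + C) := by gcongr; exact hex _
    _ ≤ 2 * (η / 4 * n ^ 2 + C) := by gcongr
    _ ≤ η * n ^ 2 := by linarith

end LocallySparse

/-! ### Replacing a neighbourhood -/

section Rewire

/-- The graph obtained from `G` by replacing the neighbourhood of `v` with `T`; it is used to
compare an extremal graph with a competitor. -/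
def rewire {V : Type*} (G : SimpleGraph V) (v : V) (T : Finset V) : SimpleGraph V :=
  G.deleteIncidenceSet v ⊔ fromRel fun a b => a = v ∧ b ∈ T

lemma rewire_adj_of_ne {V : Type*} {G : SimpleGraph V} {v a b : V} {T : Finset V}
    (ha : a ≠ v) (hb : b ≠ v) : (rewire G v T).Adj a b ↔ G.Adj a b := by
  simp [rewire, deleteIncidenceSet_adj, ha, hb]

lemma rewire_adj_self {V : Type*} {G : SimpleGraph V} {v b : V} {T : Finset V} (hv : v ∉ T) :
    (rewire G v T).Adj v b ↔ b ∈ T := by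
  have : b ∈ T → v ≠ b := by rintro hb rfl; exact hv hb
  simpa [rewire, deleteIncidenceSet_adj, hv] using this

-- A copy that uses `v` survives in `G` after moving `v` to a vertex joined to its image in `T`.
lemma containsCopy_of_containsCopy_rewire {α V : Type*} [Fintype α] {F : SimpleGraph α}
    {G : SimpleGraph V} {v : V} {T : Finset V} (hv : v ∉ T)
    (hT : ∀ W : Finset V, #W ≤ Fintype.card α → ∃ v' ∉ W, ∀ u ∈ W, u ∈ T → G.Adj v' u)
    (h : ContainsCopy F (rewire G v T)) : ContainsCopy F G := by
  classical
  obtain ⟨f, hf⟩ := h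
  obtain ⟨v', hv', hadj⟩ := hT (univ.image f) card_image_le
  have hne : ∀ a, f a ≠ v' := fun a h => hv' (mem_image.2 ⟨a, mem_univ a, h⟩)
  have hswap : ∀ a, f a ≠ v → Equiv.swap v v' (f a) = f a := fun a ha =>
    Equiv.swap_apply_of_ne_of_ne ha (hne a)
  refine ⟨f.trans (Equiv.swap v v').toEmbedding, fun a b hab => ?_⟩
  have hG := hf a b hab
  have hab' : f a ≠ f b := hG.ne
  simp only [Function.Embedding.trans_apply, Equiv.coe_toEmbedding]
  by_cases ha : f a = v
  · rw [ha, rewire_adj_self hv] at hG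
    rw [ha, Equiv.swap_apply_left, hswap b (ha ▸ hab'.symm)]
    exact hadj _ (mem_image_of_mem f (mem_univ b)) hG
  · by_cases hb : f b = v
    · rw [hb, adj_comm, rewire_adj_self hv] at hG
      rw [hb, Equiv.swap_apply_left, hswap a ha]
      exact (hadj _ (mem_image_of_mem f (mem_univ a)) hG).symm
    · rwa [hswap a ha, hswap b hb, ← rewire_adj_of_ne ha hb]

lemma update_dotProduct_adjMatrix_mulVec {V : Type*} [Fintype V] [DecidableEq V]
    (G : SimpleGraph V) [DecidableRel G.Adj] (x : V → ℝ) (v : V) (s : ℝ) :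
    Function.update x v s ⬝ᵥ G.adjMatrix ℝ *ᵥ Function.update x v s =
      Function.update x v 0 ⬝ᵥ G.adjMatrix ℝ *ᵥ Function.update x v 0 +
        2 * s * ∑ u ∈ G.neighborFinset v, x u := by
  set y := Function.update x v 0
  have hsplit : Function.update x v s = y + s • Pi.single v 1 := by
    ext u
    by_cases hu : u = v
    · subst hu; simp [y]
    · simp [y, hu]
  have hnbr : (G.adjMatrix ℝ *ᵥ y) v = ∑ u ∈ G.neighborFinset v, x u := by
    rw [adjMatrix_mulVec_apply]
    refine sum_congr rfl fun u hu => Function.update_of_ne ?_ _ _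
    exact ((mem_neighborFinset ..).1 hu).ne'
  have hsymm : y ⬝ᵥ G.adjMatrix ℝ *ᵥ Pi.single v 1 = (G.adjMatrix ℝ *ᵥ y) v := by
    rw [Matrix.dotProduct_mulVec, ← Matrix.mulVec_transpose, transpose_adjMatrix,
      dotProduct_single_one]
  rw [hsplit, Matrix.mulVec_add, Matrix.mulVec_smul, add_dotProduct, dotProduct_add,
    dotProduct_add, dotProduct_smul, smul_dotProduct, smul_dotProduct, dotProduct_smul, hsymm,
    single_one_dotProduct, single_one_dotProduct, hnbr]
  simp
  ring

lemma update_zero_dotProduct_adjMatrix_rewire_mulVec {V : Type*} [Fintype V] [DecidableEq V]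
    (G : SimpleGraph V) [DecidableRel G.Adj] (x : V → ℝ) (v : V) (T : Finset V)
    [DecidableRel (rewire G v T).Adj] :
    Function.update x v 0 ⬝ᵥ (rewire G v T).adjMatrix ℝ *ᵥ Function.update x v 0 =
      Function.update x v 0 ⬝ᵥ G.adjMatrix ℝ *ᵥ Function.update x v 0 := by
  simp only [dotProduct, Matrix.mulVec, mul_sum]
  refine sum_congr rfl fun a _ => sum_congr rfl fun b _ => ?_
  by_cases ha : a = v
  · simp [ha]
  · by_cases hb : b = v
    · simp [hb]
    · simp [adjMatrix_apply, rewire_adj_of_ne ha hb]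

lemma sum_update_sq {V : Type*} [Fintype V] [DecidableEq V] (x : V → ℝ) (v : V) (s : ℝ) :
    ∑ u, Function.update x v s u ^ 2 = s ^ 2 + ∑ u, Function.update x v 0 u ^ 2 := by
  simp only [← add_sum_erase univ _ (mem_univ v), Function.update_self]
  rw [zero_pow two_ne_zero, zero_add]
  congr 1
  refine sum_congr rfl fun u hu => ?_
  simp only [Function.update_of_ne (ne_of_mem_erase hu)]

variable {n : ℕ} {G : SimpleGraph (Fin n)} [DecidableRel G.Adj] {lam : ℝ} {x : Fin n → ℝ}

lemma IsPerronVector.dotProduct_adjMatrix_mulVec (hx : IsPerronVector G lam x) :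
    x ⬝ᵥ G.adjMatrix ℝ *ᵥ x = lam * ∑ u, x u ^ 2 := by
  rw [dotProduct, mul_sum]
  refine sum_congr rfl fun u _ => ?_
  rw [adjMatrix_mulVec_apply, ← hx.eigen u]
  ring

-- The Rayleigh quotient of `rewire G v T` at the vector `x` with its `v`-entry changed to `s` is
-- at most `lam`; the choice `s = (∑ u ∈ T, x u) / lam` gives the claim.
lemma IsPerronVector.sum_le_of_lam1_rewire_le (hx : IsPerronVector G lam x) (hlam : 0 < lam)
    {v : Fin n} {T : Finset (Fin n)} (hv : v ∉ T) (hle : lam1 (rewire G v T) ≤ lam) :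
    ∑ u ∈ T, x u ≤ lam * x v := by
  classical
  set τ := ∑ u ∈ T, x u
  set y := Function.update x v 0
  set Q := y ⬝ᵥ G.adjMatrix ℝ *ᵥ y
  set B := ∑ u, y u ^ 2
  have hQ : Q = lam * B - lam * x v ^ 2 := by
    have hself := update_dotProduct_adjMatrix_mulVec G x v (x v)
    have hnorm := sum_update_sq x v (x v)
    rw [Function.update_eq_self] at hself hnorm
    rw [hx.dotProduct_adjMatrix_mulVec, hnorm, ← hx.eigen v] at hself
    linear_combination -hself
  have hrewire : ∀ s, Q + 2 * s * τ ≤ lam * (s ^ 2 + B) := by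
    intro s
    have hform := adjForm_le_lam1 (rewire G v T) (Function.update x v s)
    have hT : (rewire G v T).neighborFinset v = T := by ext u; simp [rewire_adj_self hv]
    rw [update_dotProduct_adjMatrix_mulVec, update_zero_dotProduct_adjMatrix_rewire_mulVec, hT,
      sum_update_sq] at hform
    exact hform.trans (by gcongr)
  have hsq : τ ^ 2 ≤ (lam * x v) ^ 2 := by
    have hbest := hrewire (τ / lam)
    rw [hQ] at hbest
    field_simp at hbest
    linarith
  exact le_of_sq_le_sq hsq (mul_nonneg hlam.le (hx.nonneg v))

end Rewire

/-! ### Maximum cuts -/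

section Cut

variable {n : ℕ} {G : SimpleGraph (Fin n)} {L R : Finset (Fin n)} {lam δ : ℝ} {x : Fin n → ℝ}

lemma card_add_card_of_isCompl (h : IsCompl L R) : #L + #R = n := by
  rw [← h.compl_eq, card_add_card_compl, Fintype.card_fin]

lemma sum_card_neighborFinset_inter_comm (G : SimpleGraph (Fin n)) [DecidableRel G.Adj]
    (S T : Finset (Fin n)) :
    ∑ v ∈ S, #(G.neighborFinset v ∩ T) = ∑ v ∈ T, #(G.neighborFinset v ∩ S) := by
  have habove (v : Fin n) : G.neighborFinset v ∩ T = T.bipartiteAbove G.Adj v := by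
    ext; simp [and_comm]
  have hbelow (v : Fin n) : G.neighborFinset v ∩ S = S.bipartiteBelow G.Adj v := by
    ext; simp [and_comm, G.adj_comm]
  simp only [habove, hbelow, sum_card_bipartiteAbove_eq_sum_card_bipartiteBelow]

lemma cutCount_eq_sum [DecidableRel G.Adj] (h : IsCompl L R) :
    cutCount G L = ∑ v ∈ L, #(G.neighborFinset v ∩ R) := by
  obtain rfl := h.compl_eq
  rw [cutCount, ← card_sigma]
  refine card_bij' (fun p _ => ⟨p.1, p.2⟩) (fun p _ => (p.1, p.2)) ?_ ?_ ?_ ?_ <;>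
    simp +contextual

lemma cutCount_eq_of_isCompl (h : IsCompl L R) : cutCount G L = cutCount G R := by
  classical
  rw [cutCount_eq_sum h, cutCount_eq_sum h.symm, sum_card_neighborFinset_inter_comm]

lemma isMaxCut_symm (h : IsMaxCut G L R) : IsMaxCut G R L := by
  obtain ⟨rfl, hmax⟩ := h
  refine ⟨(compl_compl L).symm, fun S => ?_⟩
  rw [← cutCount_eq_of_isCompl isCompl_compl]
  exact hmax S

variable [DecidableRel G.Adj]

lemma card_neighborFinset_inter_le_of_isMaxCut (h : IsMaxCut G L R) {v : Fin n} (hv : v ∈ L) :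
    #(G.neighborFinset v ∩ L) ≤ #(G.neighborFinset v ∩ R) := by
  obtain ⟨rfl, hmax⟩ := h
  have hle := hmax (L.erase v)
  rw [cutCount_eq_sum isCompl_compl, cutCount_eq_sum isCompl_compl,
    sum_card_neighborFinset_inter_comm, compl_erase, sum_insert (by simpa using hv),
    sum_card_neighborFinset_inter_comm, ← add_sum_erase L _ hv] at hle
  have herase : G.neighborFinset v ∩ L.erase v = G.neighborFinset v ∩ L := by
    rw [inter_erase, erase_eq_of_notMem]
    simp
  rw [herase] at hle
  exact Nat.le_of_add_le_add_right hle

lemma sum_card_sdiff_neighborFinset_add_cutCount (h : IsCompl L R) :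
    ∑ v ∈ L, #(R \ G.neighborFinset v) + cutCount G L = #L * #R := by
  rw [cutCount_eq_sum h, ← sum_add_distrib]
  refine sum_const_nat fun v _ => ?_
  rw [inter_comm, card_sdiff_add_card_inter]

lemma IsPerronVector.sq_le_sum_card_neighborFinset (hx : IsPerronVector G lam x) :
    ∃ z, lam ^ 2 ≤ ∑ v ∈ G.neighborFinset z, (#(G.neighborFinset v) : ℝ) := by
  obtain ⟨z, hz⟩ := hx.exists_eq_one
  refine ⟨z, ?_⟩
  calc lam ^ 2 = lam * ∑ v ∈ G.neighborFinset z, x v := by rw [← hx.eigen z, hz, mul_one, sq]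
    _ = ∑ v ∈ G.neighborFinset z, ∑ u ∈ G.neighborFinset v, x u := by
      simp only [mul_sum, hx.eigen]
    _ ≤ ∑ v ∈ G.neighborFinset z, (#(G.neighborFinset v) : ℝ) := by
      gcongr with v
      simpa using sum_le_card_nsmul (G.neighborFinset v) x 1 fun u _ => hx.le_one u

/-- The cut `(L, R)` has at most `δ ^ 2` edges fewer than a balanced complete one, and both of its
sides have maximum degree at most `2 * δ`. -/
structure IsDenseCut (G : SimpleGraph (Fin n)) [DecidableRel G.Adj] (δ : ℝ)
    (L R : Finset (Fin n)) : Prop where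
  isCompl : IsCompl L R
  cutCount_ge : (n : ℝ) ^ 2 / 4 - δ ^ 2 ≤ cutCount G L
  inner_left : ∀ v ∈ L, (#(G.neighborFinset v ∩ L) : ℝ) ≤ 2 * δ
  inner_right : ∀ v ∈ R, (#(G.neighborFinset v ∩ R) : ℝ) ≤ 2 * δ

lemma IsDenseCut.symm (h : IsDenseCut G δ L R) : IsDenseCut G δ R L where
  isCompl := h.isCompl.symm
  cutCount_ge := by rw [← cutCount_eq_of_isCompl h.isCompl]; exact h.cutCount_ge
  inner_left := h.inner_right
  inner_right := h.inner_left

lemma le_cutCount_of_isMaxCut (hx : IsPerronVector G lam x) (hlam : (n : ℝ) / 2 ≤ lam)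
    (hsparse : ∀ v, ∑ u ∈ G.neighborFinset v, (#(G.neighborFinset u ∩ G.neighborFinset v) : ℝ) ≤
      δ ^ 2) (hmax : IsMaxCut G L R) : (n : ℝ) ^ 2 / 4 - δ ^ 2 ≤ cutCount G L := by
  obtain ⟨z, hz⟩ := hx.sq_le_sum_card_neighborFinset
  have hsplit : ∑ v ∈ G.neighborFinset z, (#(G.neighborFinset v) : ℝ) =
      ∑ v ∈ G.neighborFinset z, (#(G.neighborFinset v ∩ G.neighborFinset z) : ℝ) +
        cutCount G (G.neighborFinset z) := by
    rw [cutCount_eq_sum isCompl_compl]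
    push_cast
    rw [← sum_add_distrib]
    refine sum_congr rfl fun v _ => ?_
    rw [← sdiff_eq_inter_compl]
    exact mod_cast (card_inter_add_card_sdiff ..).symm
  have hcut : (cutCount G (G.neighborFinset z) : ℝ) ≤ cutCount G L := mod_cast hmax.2 _
  have hsq : ((n : ℝ) / 2) ^ 2 ≤ lam ^ 2 := by gcongr
  linarith [hsparse z]

lemma sum_card_sdiff_neighborFinset_le (h : IsCompl L R)
    (hcut : (n : ℝ) ^ 2 / 4 - δ ^ 2 ≤ cutCount G L) :
    ∑ v ∈ L, (#(R \ G.neighborFinset v) : ℝ) ≤ δ ^ 2 := by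
  have hsum : ∑ v ∈ L, (#(R \ G.neighborFinset v) : ℝ) + cutCount G L = #L * #R :=
    mod_cast sum_card_sdiff_neighborFinset_add_cutCount h
  have hcard : (#L + #R : ℝ) = n := mod_cast card_add_card_of_isCompl h
  rw [← hcard] at hcut
  linarith [sq_nonneg (#L - #R : ℝ)]

-- The at least `#(N v ∩ L) ^ 2` pairs in `(N v ∩ L) × (N v ∩ R)` are either edges inside `N v` or
-- nonedges across the cut.
lemma card_neighborFinset_inter_le (hδ : 0 ≤ δ)
    (hsparse : ∀ v, ∑ u ∈ G.neighborFinset v, (#(G.neighborFinset u ∩ G.neighborFinset v) : ℝ) ≤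
      δ ^ 2) (hmax : IsMaxCut G L R) (hcut : (n : ℝ) ^ 2 / 4 - δ ^ 2 ≤ cutCount G L)
    {v : Fin n} (hv : v ∈ L) : (#(G.neighborFinset v ∩ L) : ℝ) ≤ 2 * δ := by
  have hcompl : IsCompl L R := hmax.1 ▸ isCompl_compl
  set A := G.neighborFinset v ∩ L
  set B := G.neighborFinset v ∩ R
  have hAB : (#A : ℝ) ≤ #B := mod_cast card_neighborFinset_inter_le_of_isMaxCut hmax hv
  have hpairs : (#A * #B : ℝ) ≤ δ ^ 2 + δ ^ 2 := calc
    (#A * #B : ℝ) = ∑ a ∈ A, (#(G.neighborFinset a ∩ B) : ℝ) +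
        ∑ a ∈ A, (#(B \ G.neighborFinset a) : ℝ) := by
      rw [← sum_add_distrib, ← nsmul_eq_mul, ← sum_const]
      refine sum_congr rfl fun a _ => ?_
      rw [inter_comm]
      exact mod_cast (card_inter_add_card_sdiff ..).symm
    _ ≤ ∑ a ∈ A, (#(G.neighborFinset a ∩ G.neighborFinset v) : ℝ) +
        ∑ a ∈ A, (#(R \ G.neighborFinset a) : ℝ) := by
      gcongr
      exacts [inter_subset_left, inter_subset_right]
    _ ≤ ∑ a ∈ G.neighborFinset v, (#(G.neighborFinset a ∩ G.neighborFinset v) : ℝ) +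
        ∑ a ∈ L, (#(R \ G.neighborFinset a) : ℝ) := by
      gcongr
      exacts [inter_subset_left, inter_subset_right]
    _ ≤ δ ^ 2 + δ ^ 2 := add_le_add (hsparse v) (sum_card_sdiff_neighborFinset_le hcompl hcut)
  refine le_of_sq_le_sq ?_ (by positivity)
  nlinarith [sq_nonneg δ]

theorem isDenseCut_of_isMaxCut (hx : IsPerronVector G lam x) (hlam : (n : ℝ) / 2 ≤ lam)
    (hδ : 0 ≤ δ)
    (hsparse : ∀ v, ∑ u ∈ G.neighborFinset v, (#(G.neighborFinset u ∩ G.neighborFinset v) : ℝ) ≤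
      δ ^ 2) (hmax : IsMaxCut G L R) : IsDenseCut G δ L R where
  isCompl := hmax.1 ▸ isCompl_compl
  cutCount_ge := le_cutCount_of_isMaxCut hx hlam hsparse hmax
  inner_left _ :=
    card_neighborFinset_inter_le hδ hsparse hmax (le_cutCount_of_isMaxCut hx hlam hsparse hmax)
  inner_right _ :=
    card_neighborFinset_inter_le hδ hsparse (isMaxCut_symm hmax)
      (le_cutCount_of_isMaxCut hx hlam hsparse (isMaxCut_symm hmax))

end Cut

namespace IsDenseCut

variable {n k : ℕ} {G : SimpleGraph (Fin n)} [DecidableRel G.Adj] {L R : Finset (Fin n)}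
  {lam δ : ℝ} {x : Fin n → ℝ}

lemma abs_card_sub_le (h : IsDenseCut G δ L R) (hδ : 0 ≤ δ) : |(#L : ℝ) - n / 2| ≤ δ := by
  have hcut : (cutCount G L : ℝ) ≤ #L * #R :=
    mod_cast (sum_card_sdiff_neighborFinset_add_cutCount h.isCompl).le.trans' (Nat.le_add_left ..)
  have hcard : (#L + #R : ℝ) = n := mod_cast card_add_card_of_isCompl h.isCompl
  refine abs_le_of_sq_le_sq ?_ hδ
  have hge := h.cutCount_ge
  rw [← hcard] at hge ⊢
  linarith

lemma card_filter_sdiff_gt_le (h : IsDenseCut G δ L R) (hδ : 0 < δ) :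
    (#(R.filter fun u => δ < #(L \ G.neighborFinset u)) : ℝ) ≤ δ := by
  set S := R.filter fun u => δ < #(L \ G.neighborFinset u)
  have hS : #S • δ ≤ ∑ u ∈ S, (#(L \ G.neighborFinset u) : ℝ) :=
    card_nsmul_le_sum _ _ _ fun u hu => (mem_filter.1 hu).2.le
  have hle : ∑ u ∈ S, (#(L \ G.neighborFinset u) : ℝ) ≤ δ ^ 2 :=
    (sum_le_sum_of_subset_of_nonneg (filter_subset ..) fun _ _ _ => by positivity).trans
      (sum_card_sdiff_neighborFinset_le h.isCompl.symm h.symm.cutCount_ge)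
  rw [nsmul_eq_mul] at hS
  exact le_of_mul_le_mul_right (by linarith) hδ

lemma exists_notMem_forall_adj {T W : Finset (Fin n)}
    (hT : ∀ u ∈ T, (#(L \ G.neighborFinset u) : ℝ) ≤ δ) (hδ : 0 ≤ δ)
    (hW : #W * (δ + 1) < #L) : ∃ v ∉ W, ∀ u ∈ W, u ∈ T → G.Adj v u := by
  set bad := (W ∩ T).biUnion fun u => L \ G.neighborFinset u
  have hbad : (#bad : ℝ) ≤ #W * δ := calc
    (#bad : ℝ) ≤ ∑ u ∈ W ∩ T, (#(L \ G.neighborFinset u) : ℝ) := mod_cast card_biUnion_le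
    _ ≤ #(W ∩ T) • δ := sum_le_card_nsmul _ _ _ fun u hu => hT u (mem_inter.1 hu).2
    _ ≤ #W * δ := by
      rw [nsmul_eq_mul]
      gcongr
      exact inter_subset_left
  have hcard : #(W ∪ bad) < #L := by
    have : (#(W ∪ bad) : ℝ) ≤ #W + #bad := mod_cast card_union_le ..
    exact_mod_cast (by linarith : (#(W ∪ bad) : ℝ) < #L)
  obtain ⟨v, hvL, hv⟩ := exists_mem_notMem_of_card_lt_card hcard
  rw [mem_union, not_or] at hv
  refine ⟨v, hv.1, fun u hu huT => ?_⟩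
  by_contra hadj
  exact hv.2 (mem_biUnion.2 ⟨u, mem_inter.2 ⟨hu, huT⟩,
    mem_sdiff.2 ⟨hvL, fun h => hadj ((mem_neighborFinset ..).1 h).symm⟩⟩)

lemma lam_mul_le (h : IsDenseCut G δ L R) (hx : IsPerronVector G lam x) {v : Fin n}
    (hv : v ∈ L) : lam * x v ≤ 2 * δ + ∑ u ∈ G.neighborFinset v ∩ R, x u := by
  have hL : ∑ u ∈ G.neighborFinset v ∩ L, x u ≤ 2 * δ :=
    (sum_le_card_nsmul _ x 1 fun u _ => hx.le_one u).trans (by simpa using h.inner_left v hv)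
  have hsplit := sum_inter_add_sum_sdiff (G.neighborFinset v) L x
  rw [sdiff_eq_inter_compl, h.isCompl.compl_eq, ← hx.eigen v] at hsplit
  linarith

-- Redirecting `v` to the vertices of `R` with few nonneighbours in `L` cannot create a wheel, so by
-- extremality it cannot increase the spectral radius.
lemma sum_right_le (h : IsDenseCut G δ L R) (hδ : 0 < δ) (hG : IsSpexWheel (2 * k + 1) G)
    (hx : IsPerronVector G (lam1 G) x) (hlam : 0 < lam1 G) (hL : (2 * k + 1) * (δ + 1) < #L)
    (v : Fin n) : ∑ u ∈ R, x u ≤ δ + 1 + lam1 G * x v := by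
  set T := R.filter fun u => (#(L \ G.neighborFinset u) : ℝ) ≤ δ
  have hrewire : ∑ u ∈ T.erase v, x u ≤ lam1 G * x v := by
    refine hx.sum_le_of_lam1_rewire_le hlam (notMem_erase v T) (hG.2 _ fun hcopy => hG.1 ?_)
    refine containsCopy_of_containsCopy_rewire (notMem_erase v T) (fun W hW => ?_) hcopy
    rw [Fintype.card_fin] at hW
    refine exists_notMem_forall_adj (fun u hu => (mem_filter.1 (mem_of_mem_erase hu)).2) hδ.le
      (hL.trans_le' ?_)
    gcongr
    exact_mod_cast hW
  have herase : ∑ u ∈ T, x u ≤ ∑ u ∈ T.erase v, x u + 1 := by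
    by_cases hv : v ∈ T
    · linarith [sum_erase_add T x hv, hx.le_one v]
    · rw [erase_eq_of_notMem hv]
      linarith
  have hfew : ∑ u ∈ R with ¬ (#(L \ G.neighborFinset u) : ℝ) ≤ δ, x u ≤ δ := by
    refine (sum_le_card_nsmul _ x 1 fun u _ => hx.le_one u).trans ?_
    simpa using h.card_filter_sdiff_gt_le hδ
  linarith [sum_filter_add_sum_filter_not R (fun u => (#(L \ G.neighborFinset u) : ℝ) ≤ δ) x]

lemma lam1_mul_one_sub_le (h : IsDenseCut G δ L R) (hδ : 1 ≤ δ) (hG : IsSpexWheel (2 * k + 1) G)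
    (hx : IsPerronVector G (lam1 G) x) (hlam : 0 < lam1 G) (hL : (2 * k + 1) * (δ + 1) < #L)
    (hR : (2 * k + 1) * (δ + 1) < #R) (v : Fin n) : lam1 G * (1 - x v) ≤ 4 * δ := by
  obtain ⟨z, hz⟩ := hx.exists_eq_one
  wlog hzL : z ∈ L generalizing L R
  · exact this h.symm hR hL (by rwa [← h.isCompl.compl_eq, mem_compl])
  have hle := h.lam_mul_le hx hzL
  rw [hz, mul_one] at hle
  have hsub : ∑ u ∈ G.neighborFinset z ∩ R, x u ≤ ∑ u ∈ R, x u :=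
    sum_le_sum_of_subset_of_nonneg inter_subset_right fun u _ _ => hx.nonneg u
  linarith [h.sum_right_le (by linarith) hG hx hlam hL v]

lemma card_right_sdiff_le (h : IsDenseCut G δ L R) (hδ : 0 ≤ δ) (hx : IsPerronVector G lam x)
    (hlam : (n : ℝ) / 2 ≤ lam) (hweight : ∀ v, lam * (1 - x v) ≤ 4 * δ) {v : Fin n} (hv : v ∈ L) :
    (#(R \ G.neighborFinset v) : ℝ) ≤ 7 * δ := by
  have hnbr : ∑ u ∈ G.neighborFinset v ∩ R, x u ≤ #(G.neighborFinset v ∩ R) :=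
    (sum_le_card_nsmul _ x 1 fun u _ => hx.le_one u).trans_eq (by simp)
  have hcard : (#(R \ G.neighborFinset v) + #(G.neighborFinset v ∩ R) : ℝ) = #R := by
    rw [inter_comm]
    exact mod_cast card_sdiff_add_card_inter ..
  linarith [h.lam_mul_le hx hv, hweight v, (abs_le.1 (h.symm.abs_card_sub_le hδ)).2]

end IsDenseCut

/-! ### Near-extremal graphs -/

section HighDegree

variable {V : Type*} [Fintype V] [DecidableEq V] {G : SimpleGraph V} [DecidableRel G.Adj]
  {S : Finset V} {D : ℕ}

lemma sum_card_neighborFinset_inter_le_highDegree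
    (hD : ∀ w ∈ S, #(G.neighborFinset w ∩ S) ≤ D) (j : ℕ) :
    ∑ w ∈ S, #(G.neighborFinset w ∩ S) ≤ #S * j + #(highDegree G S (j + 1)) * (D - j) := by
  rw [highDegree, card_filter, sum_mul, card_eq_sum_ones S, sum_mul, ← sum_add_distrib]
  refine sum_le_sum fun w hw => ?_
  have := hD w hw
  split_ifs <;> omega

end HighDegree

/-- The combinatorial and spectral information on a graph of maximum spectral radius, relative to
its maximum cut `(L, R)`: each vertex misses at most `M` vertices of the opposite side, where `M` is
a small fraction of `n`, the entries of the Perron vector are close to `1`, and the eigenvalue is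
at least that of a competitor with sides of sizes `#L` and `#R`. -/
structure IsNearExtremal {n : ℕ} (k M : ℕ) (G : SimpleGraph (Fin n)) [DecidableRel G.Adj]
    (lam : ℝ) (x : Fin n → ℝ) (L R : Finset (Fin n)) : Prop where
  isCompl : IsCompl L R
  three_le : 3 ≤ k
  wheelFree : WheelFree (2 * k + 1) G
  perron : IsPerronVector G lam x
  weight_ge : ∀ v, 1 - 1 / (1000 * k) ≤ x v
  half_le : (n : ℝ) / 2 ≤ lam
  three_le_missing : 3 ≤ M
  missing_le : 1000 * k ^ 3 * M ≤ n
  card_left : n ≤ 2 * (#L + M)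
  card_right : n ≤ 2 * (#R + M)
  missing_left : ∀ v ∈ L, #(R \ G.neighborFinset v) ≤ M
  missing_right : ∀ v ∈ R, #(L \ G.neighborFinset v) ≤ M
  competitor : (#L * #R : ℝ) ≤ lam * (lam - (k - 1))

namespace IsNearExtremal

variable {n k M : ℕ} {G : SimpleGraph (Fin n)} [DecidableRel G.Adj] {lam : ℝ} {x : Fin n → ℝ}
  {L R : Finset (Fin n)}

lemma symm (h : IsNearExtremal k M G lam x L R) : IsNearExtremal k M G lam x R L where
  __ := h
  isCompl := h.isCompl.symm
  card_left := h.card_right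
  card_right := h.card_left
  missing_left := h.missing_right
  missing_right := h.missing_left
  competitor := by rw [mul_comm (#R : ℝ)]; exact h.competitor

lemma mul_missing_le (h : IsNearExtremal k M G lam x L R) : 9000 * (k * M) ≤ n := calc
  9000 * (k * M) = 1000 * (3 ^ 2 * k) * M := by ring
  _ ≤ 1000 * (k ^ 2 * k) * M := by gcongr; exact h.three_le
  _ = 1000 * k ^ 3 * M := by ring
  _ ≤ n := h.missing_le

lemma missing_le_mul (h : IsNearExtremal k M G lam x L R) : 3 * M ≤ k * M :=
  Nat.mul_le_mul_right M h.three_le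

lemma three_mul_le_mul_missing (h : IsNearExtremal k M G lam x L R) : 3 * k ≤ k * M := by
  rw [mul_comm]
  exact Nat.mul_le_mul_left k h.three_le_missing

lemma inner_left (h : IsNearExtremal k M G lam x L R) :
    ∀ v ∈ L, #(G.neighborFinset v ∩ L) ≤ k - 1 := by
  intro v hv
  by_contra! hlt
  obtain ⟨us, hus, hcard⟩ := exists_subset_card_eq (show k ≤ #(G.neighborFinset v ∩ L) by omega)
  refine h.wheelFree (containsCopy_wheelGraph_of_card_le (R := R) (M := M)
    (by have := h.three_le; omega) (hus.trans inter_subset_left) hcard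
    (fun u hu => h.missing_left u ?_) ?_)
  · rcases mem_insert.1 hu with rfl | hu
    exacts [hv, (mem_inter.1 (hus hu)).2]
  · have := h.mul_missing_le
    have := h.missing_le_mul
    have := h.three_mul_le_mul_missing
    have := h.card_right
    rw [add_one_mul]
    omega

-- The hypotheses describe a wheel with hub `v`: the vertices `us` of its rim separate paths in `R`,
-- namely those of `Ps` and one on `j + 1` vertices for each `j ∈ js`.
lemma not_exists_wheel (h : IsNearExtremal k M G lam x L R) {v : Fin n} (hv : v ∈ L)
    {us : Finset (Fin n)} (hus : us ⊆ G.neighborFinset v ∩ L) (hcard_le : #us ≤ k)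
    {Ps : List (List (Fin n))} (hPs : IsPathSystem G R Ps)
    (hPs_adj : ∀ u ∈ insert v us, ∀ q ∈ Ps.flatten, G.Adj u q) {js : List ℕ}
    (hcard : #us = Ps.length + js.length)
    (hrim : #us + Ps.flatten.length + (js.map (· + 1)).sum = 2 * k)
    (hjs : ∀ j ∈ js, j ≤ 2 ∧ 2 * k ^ 2 * M < #(highDegree G R j)) : False := by
  have hk := h.three_le
  refine h.wheelFree (containsCopy_wheelGraph_of_highDegree (M := M) h.symm.inner_left (by omega)
    (hus.trans inter_subset_left) (fun u hu => h.missing_left u ?_) hPs hPs_adj hcard hrim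
    fun j hj => ⟨(hjs j hj).1, (hjs j hj).2.trans_le' ?_⟩)
  · rcases mem_insert.1 hu with rfl | hu
    exacts [hv, (mem_inter.1 (hus hu)).2]
  · have hmissing : (k + 1) * M + 2 * k ≤ 2 * k * M := by
      linarith [h.three_mul_le_mul_missing, h.missing_le_mul,
        Nat.mul_le_mul_right M hk, h.three_le_missing]
    calc (k - 1 + 1) * ((#us + 1) * M + 2 * k) ≤ k * ((k + 1) * M + 2 * k) := by
          rw [Nat.sub_add_cancel (by omega)]
          gcongr
      _ ≤ k * (2 * k * M) := by gcongr
      _ = 2 * k ^ 2 * M := by ring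

lemma not_exists_wheel_of_replicate (h : IsNearExtremal k M G lam x L R) {v : Fin n} (hv : v ∈ L)
    {a b j : ℕ} (hj : j ≤ 2) (hdeg : a + b = #(G.neighborFinset v ∩ L))
    (hrim : (j + 2) * a + 2 * b = 2 * k) (hhigh : 2 * k ^ 2 * M < #(highDegree G R j)) : False := by
  refine h.not_exists_wheel hv subset_rfl ((h.inner_left v hv).trans (Nat.sub_le ..)) (Ps := [])
    ⟨by simp, by simp, by simp, by simp⟩ (by simp) (js := List.replicate a j ++ List.replicate b 0)
    (by simp [hdeg]) ?_ fun i hi => ?_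
  · simp only [← hdeg, List.flatten_nil, List.length_nil, List.map_append, List.map_replicate,
      List.sum_append, List.sum_replicate, smul_eq_mul]
    linarith
  · rw [List.mem_append, List.mem_replicate, List.mem_replicate] at hi
    rcases hi with ⟨-, rfl⟩ | ⟨-, rfl⟩
    · exact ⟨hj, hhigh⟩
    · exact ⟨zero_le_two, hhigh.trans_le (card_le_card (highDegree_anti (Nat.zero_le j)))⟩

lemma three_mul_inner_left_le (h : IsNearExtremal k M G lam x L R)
    (hhigh : 2 * k ^ 2 * M < #(highDegree G R 1)) {v : Fin n} (hv : v ∈ L) :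
    3 * #(G.neighborFinset v ∩ L) ≤ 2 * k - 1 := by
  by_contra! hlt
  have hle := h.inner_left v hv
  have hk := h.three_le
  exact h.not_exists_wheel_of_replicate hv one_le_two
    (a := 2 * k - 2 * #(G.neighborFinset v ∩ L)) (b := 3 * #(G.neighborFinset v ∩ L) - 2 * k)
    (by omega) (by omega) hhigh

lemma two_mul_inner_left_le (h : IsNearExtremal k M G lam x L R)
    (hhigh : 2 * k ^ 2 * M < #(highDegree G R 2)) {v : Fin n} (hv : v ∈ L) :
    2 * #(G.neighborFinset v ∩ L) ≤ k - 1 := by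
  by_contra! hlt
  have hle := h.inner_left v hv
  have hk := h.three_le
  exact h.not_exists_wheel_of_replicate hv le_rfl
    (a := k - #(G.neighborFinset v ∩ L)) (b := 2 * #(G.neighborFinset v ∩ L) - k)
    (by omega) (by omega) hhigh

lemma weight_ge_const (h : IsNearExtremal k M G lam x L R) (v : Fin n) : 999 / 1000 ≤ x v := by
  have hk : (3 : ℝ) ≤ k := mod_cast h.three_le
  have hdiv : 1 / (1000 * (k : ℝ)) ≤ 1 / 1000 := by gcongr; linarith
  linarith [h.weight_ge v]

lemma weight_pos (h : IsNearExtremal k M G lam x L R) (v : Fin n) : 0 < x v := by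
  linarith [h.weight_ge_const v]

lemma pos (h : IsNearExtremal k M G lam x L R) : 0 < n := by
  have := h.mul_missing_le
  have := h.missing_le_mul
  have := h.three_le_missing
  omega

lemma lam_pos (h : IsNearExtremal k M G lam x L R) : 0 < lam := by
  have hn : (0 : ℝ) < n := mod_cast h.pos
  linarith [h.half_le]

lemma le_three_mul_card_left (h : IsNearExtremal k M G lam x L R) : n ≤ 3 * #L := by
  have := h.mul_missing_le
  have := h.missing_le_mul
  have := h.card_left
  omega

lemma nonempty_left (h : IsNearExtremal k M G lam x L R) : L.Nonempty := by
  have := h.pos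
  have := h.le_three_mul_card_left
  exact card_pos.1 (by omega)

lemma lam_mul_le_sum (h : IsNearExtremal k M G lam x L R) (v : Fin n) :
    lam * x v ≤ ∑ u ∈ G.neighborFinset v ∩ L, x u + ∑ u ∈ R, x u := by
  rw [h.perron.eigen, ← sum_inter_add_sum_sdiff (G.neighborFinset v) L x, sdiff_eq_inter_compl,
    h.isCompl.compl_eq]
  gcongr
  · exact fun _ _ _ => (h.weight_pos _).le
  · exact inter_subset_right

lemma lam_mul_sum_left_le (h : IsNearExtremal k M G lam x L R) :
    lam * ∑ v ∈ L, x v ≤ ∑ v ∈ L, (#(G.neighborFinset v ∩ L) : ℝ) + #L * ∑ u ∈ R, x u := by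
  rw [mul_sum, ← nsmul_eq_mul, ← sum_const, ← sum_add_distrib]
  refine sum_le_sum fun v _ => (h.lam_mul_le_sum v).trans ?_
  gcongr
  simpa using sum_le_card_nsmul (G.neighborFinset v ∩ L) x 1 fun u _ => h.perron.le_one u

lemma mul_card_left_le_mul_sum (h : IsNearExtremal k M G lam x L R) :
    (k - 1 - 1 / 1000) * #L ≤ (k - 1) * ∑ v ∈ L, x v := by
  have hk : (3 : ℝ) ≤ k := mod_cast h.three_le
  have hcoeff : (k - 1 : ℝ) * (1 - 1 / (1000 * k)) = k - 1 - 1 / 1000 + 1 / (1000 * k) := by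
    field_simp
    ring
  calc (k - 1 - 1 / 1000 : ℝ) * #L ≤ (k - 1) * (1 - 1 / (1000 * k)) * #L := by
        rw [hcoeff]
        gcongr
        exact le_add_of_nonneg_right (by positivity)
    _ = (k - 1) * (#L • (1 - 1 / (1000 * k))) := by rw [nsmul_eq_mul]; ring
    _ ≤ (k - 1) * ∑ v ∈ L, x v := by
      gcongr
      · linarith
      · exact card_nsmul_le_sum _ _ _ fun v _ => h.weight_ge v

-- Two steps of the eigenvalue equation bound `lam ^ 2 * ∑ v ∈ L, x v` in terms of the numbers of
-- edges inside the two sides; the term `#L * #R` is controlled by the competitor.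
lemma mul_card_left_le_sum (h : IsNearExtremal k M G lam x L R) {c : ℝ}
    (hc : ∑ v ∈ R, (#(G.neighborFinset v ∩ R) : ℝ) ≤ c * lam) :
    (k - 1 - 1 / 1000 - c) * #L ≤ ∑ v ∈ L, (#(G.neighborFinset v ∩ L) : ℝ) := by
  set X := ∑ v ∈ L, x v
  set E := ∑ v ∈ L, (#(G.neighborFinset v ∩ L) : ℝ)
  have hsquare : lam * (lam * X) ≤ lam * (E + c * #L) + #L * #R * X := calc
    lam * (lam * X) ≤ lam * (E + #L * ∑ u ∈ R, x u) := by
      gcongr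
      exacts [h.lam_pos.le, h.lam_mul_sum_left_le]
    _ = lam * E + #L * (lam * ∑ u ∈ R, x u) := by ring
    _ ≤ lam * E + #L * (c * lam + #R * X) := by
      gcongr
      exact h.symm.lam_mul_sum_left_le.trans (by gcongr)
    _ = lam * (E + c * #L) + #L * #R * X := by ring
  have hcompetitor : #L * #R * X ≤ lam * (lam - (k - 1)) * X :=
    mul_le_mul_of_nonneg_right h.competitor (sum_nonneg fun v _ => (h.weight_pos v).le)
  have hE : (k - 1) * X ≤ E + c * #L := le_of_mul_le_mul_left (by linarith) h.lam_pos
  linarith [h.mul_card_left_le_mul_sum]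

lemma lam_sub_mul_le_sum (h : IsNearExtremal k M G lam x L R) {v : Fin n}
    (hmax : ∀ u ∈ L, x u ≤ x v) {a : ℕ} (ha : #(G.neighborFinset v ∩ L) ≤ a) :
    (lam - a) * x v ≤ ∑ u ∈ R, x u := by
  have hinner : ∑ u ∈ G.neighborFinset v ∩ L, x u ≤ a * x v := calc
    ∑ u ∈ G.neighborFinset v ∩ L, x u ≤ #(G.neighborFinset v ∩ L) • x v :=
      sum_le_card_nsmul _ _ _ fun u hu => hmax u (mem_inter.1 hu).2
    _ ≤ a * x v := by
      rw [nsmul_eq_mul]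
      have := h.weight_pos v
      gcongr
  linarith [h.lam_mul_le_sum v]

lemma lam_mul_lam_sub_le_of_inner_le (h : IsNearExtremal k M G lam x L R) {a b : ℕ}
    (ha : ∀ v ∈ L, #(G.neighborFinset v ∩ L) ≤ a) (hb : ∀ v ∈ R, #(G.neighborFinset v ∩ R) ≤ b)
    (hab : a + b ≤ k - 1) : lam * (lam - (k - 1)) ≤ #L * #R := by
  obtain ⟨v, hv, hvmax⟩ := exists_max_image L x h.nonempty_left
  obtain ⟨w, hw, hwmax⟩ := exists_max_image R x h.symm.nonempty_left
  have hvw : (lam - a) * x v ≤ #R * x w := (h.lam_sub_mul_le_sum hvmax (ha v hv)).trans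
    (by simpa using sum_le_card_nsmul R x _ hwmax)
  have hwv : (lam - b) * x w ≤ #L * x v := (h.symm.lam_sub_mul_le_sum hwmax (hb w hw)).trans
    (by simpa using sum_le_card_nsmul L x _ hvmax)
  have hab' : (a + b : ℝ) ≤ k - 1 := by
    rw [le_sub_iff_add_le]
    exact_mod_cast (by have := h.three_le; omega : a + b + 1 ≤ k)
  have hb_le : (b : ℝ) ≤ lam := by
    have : (2 * b : ℝ) ≤ n := by
      have := h.mul_missing_le
      have := h.three_mul_le_mul_missing
      exact_mod_cast (by omega : 2 * b ≤ n)
    linarith [h.half_le]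
  have hprod : (lam - b) * (lam - a) ≤ #L * #R := by
    refine le_of_mul_le_mul_right ?_ (h.weight_pos v)
    calc (lam - b) * (lam - a) * x v = (lam - b) * ((lam - a) * x v) := by ring
      _ ≤ (lam - b) * (#R * x w) := by gcongr
      _ = #R * ((lam - b) * x w) := by ring
      _ ≤ #R * (#L * x v) := by gcongr
      _ = #L * #R * x v := by ring
  have hmul : lam * (a + b) ≤ lam * (k - 1) := by gcongr; exact h.lam_pos.le
  linarith [mul_nonneg (Nat.cast_nonneg (α := ℝ) a) (Nat.cast_nonneg (α := ℝ) b)]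

lemma sum_inner_right_le (h : IsNearExtremal k M G lam x L R) {j : ℕ}
    (hfew : #(highDegree G R (j + 1)) ≤ 2 * k ^ 2 * M) :
    ∑ v ∈ R, (#(G.neighborFinset v ∩ R) : ℝ) ≤ #R * j + n / 500 := by
  have hsum : 500 * ∑ v ∈ R, #(G.neighborFinset v ∩ R) ≤ 500 * (#R * j) + n := calc
    500 * ∑ v ∈ R, #(G.neighborFinset v ∩ R) ≤ 500 * (#R * j + 2 * k ^ 2 * M * k) := by
      refine Nat.mul_le_mul_left _
        ((sum_card_neighborFinset_inter_le_highDegree h.symm.inner_left j).trans ?_)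
      gcongr
      omega
    _ = 500 * (#R * j) + 1000 * k ^ 3 * M := by ring
    _ ≤ 500 * (#R * j) + n := by grw [h.missing_le]
  have : (500 * ∑ v ∈ R, (#(G.neighborFinset v ∩ R) : ℝ)) ≤ 500 * (#R * j) + n := mod_cast hsum
  linarith

lemma card_left_le_highDegree (h : IsNearExtremal k M G lam x L R)
    (hfew : #(highDegree G R 1) ≤ 2 * k ^ 2 * M) :
    99 / 100 * (#L : ℝ) ≤ #(highDegree G L (k - 1)) := by
  have hk := h.three_le
  have hR : ∑ v ∈ R, (#(G.neighborFinset v ∩ R) : ℝ) ≤ 1 / 250 * lam := by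
    have hsum := h.sum_inner_right_le hfew
    rw [Nat.cast_zero, mul_zero, zero_add] at hsum
    linarith [h.half_le]
  have hL : ∑ v ∈ L, (#(G.neighborFinset v ∩ L) : ℝ) ≤
      #L * (k - 2) + #(highDegree G L (k - 1)) := by
    have hsum := sum_card_neighborFinset_inter_le_highDegree h.inner_left (k - 2)
    rw [show k - 2 + 1 = k - 1 by omega, show k - 1 - (k - 2) = 1 by omega, mul_one] at hsum
    have : ((k - 2 : ℕ) : ℝ) = k - 2 := by rw [Nat.cast_sub (by omega), Nat.cast_ofNat]
    rw [← this]
    exact_mod_cast hsum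
  linarith [h.mul_card_left_le_sum hR, Nat.cast_nonneg (α := ℝ) #L]

lemma exists_mem_forall_adj (h : IsNearExtremal k M G lam x L R) {S F : Finset (Fin n)}
    (hSL : S ⊆ L) (hS : #F * M * k < #S) (hF : F ⊆ R) :
    ∃ v ∈ S, ∀ u ∈ insert v (G.neighborFinset v ∩ L), ∀ q ∈ F, G.Adj u q := by
  set missed := F.biUnion fun q => L \ G.neighborFinset q
  have hmissed : #missed ≤ #F * M :=
    card_biUnion_le_card_mul _ _ _ fun q hq => h.missing_right q (hF hq)
  have hcard : #(missed.biUnion fun b => insert b (G.neighborFinset b ∩ L)) < #S := by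
    refine hS.trans_le' ((card_biUnion_le_card_mul _ _ k fun b hb => ?_).trans (by gcongr))
    obtain ⟨q, -, hbq⟩ := mem_biUnion.1 hb
    have := h.inner_left b (mem_sdiff.1 hbq).1
    have := card_insert_le b (G.neighborFinset b ∩ L)
    have := h.three_le
    omega
  obtain ⟨v, hvS, hv⟩ := exists_mem_notMem_of_card_lt_card hcard
  simp only [mem_biUnion, mem_insert, mem_inter, mem_neighborFinset, not_exists, not_and] at hv
  refine ⟨v, hvS, fun u hu q hq => ?_⟩
  have hu_missed : u ∉ missed := by
    intro hmem
    refine hv u hmem ?_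
    rcases mem_insert.1 hu with rfl | hu
    · exact Or.inl rfl
    · exact Or.inr ⟨((mem_neighborFinset ..).1 (mem_inter.1 hu).1).symm, hSL hvS⟩
  have huL : u ∈ L := by
    rcases mem_insert.1 hu with rfl | hu
    exacts [hSL hvS, (mem_inter.1 hu).2]
  exact (adj_of_notMem_biUnion_sdiff huL hu_missed hq).symm

lemma lt_card_highDegree_zero (h : IsNearExtremal k M G lam x L R) :
    2 * k ^ 2 * M < #(highDegree G L 0) := by
  rw [highDegree_zero]
  have hthreshold : 1500 * (2 * k ^ 2 * M) ≤ n := calc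
    1500 * (2 * k ^ 2 * M) = 1000 * (3 * (k ^ 2 * M)) := by ring
    _ ≤ 1000 * (k * (k ^ 2 * M)) := by gcongr; exact h.three_le
    _ = 1000 * k ^ 3 * M := by ring
    _ ≤ n := h.missing_le
  have := h.le_three_mul_card_left
  have := h.pos
  omega

-- Two edges inside `R` allow two of the `k` rim segments in `R` to be longer, so that `k - 1` rim
-- vertices in `L` suffice for a wheel.
lemma sum_inner_right_le_two (h : IsNearExtremal k M G lam x L R)
    (hfew : #(highDegree G R 1) ≤ 2 * k ^ 2 * M) :
    ∑ v ∈ R, #(G.neighborFinset v ∩ R) ≤ 2 := by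
  by_contra! hlt
  have hk := h.three_le
  obtain ⟨Ps, hPs, hflatten, hlen⟩ := exists_isPathSystem_of_two_lt_sum hlt
  have hmany : #Ps.flatten.toFinset * M * k < #(highDegree G L (k - 1)) := by
    have hF : #Ps.flatten.toFinset ≤ 4 := (List.toFinset_card_le _).trans (by omega)
    have hbound : #Ps.flatten.toFinset * M * k ≤ 4 * (k * M) := by
      rw [mul_assoc, mul_comm M k]
      gcongr
    have hhigh : 99 * #L ≤ 100 * #(highDegree G L (k - 1)) := by
      have := h.card_left_le_highDegree hfew
      exact_mod_cast (by linarith : (99 * #L : ℝ) ≤ 100 * #(highDegree G L (k - 1)))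
    have := h.le_three_mul_card_left
    have := h.mul_missing_le
    have := h.pos
    omega
  obtain ⟨v, hv, hadj⟩ := h.exists_mem_forall_adj (filter_subset ..) hmany
    fun q hq => hPs.mem q (List.mem_toFinset.1 hq)
  obtain ⟨hvL, hdeg⟩ := mem_filter.1 hv
  obtain ⟨us, hus, hcard⟩ := exists_subset_card_eq hdeg
  refine h.not_exists_wheel hvL hus (by omega) hPs
    (fun u hu q hq => hadj u (insert_subset_insert v hus hu) q (List.mem_toFinset.2 hq))
    (js := List.replicate (k - 1 - Ps.length) 0) ?_ ?_ fun j hj => ?_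
  · rw [List.length_replicate]
    omega
  · rw [List.map_replicate, List.sum_replicate, smul_eq_mul]
    omega
  · obtain ⟨-, rfl⟩ := List.mem_replicate.1 hj
    exact ⟨zero_le_two, h.symm.lt_card_highDegree_zero⟩

lemma lam_mul_lam_sub_le_of_few_edges (h : IsNearExtremal k M G lam x L R)
    (hfew : #(highDegree G R 1) ≤ 2 * k ^ 2 * M) :
    lam * (lam - (k - 1)) ≤ #L * #R + 5 / 2 := by
  obtain ⟨v, hv, hmax⟩ := exists_max_image L x h.nonempty_left
  have hdeg := h.lam_sub_mul_le_sum hmax (h.inner_left v hv)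
  rw [Nat.cast_sub (by linarith [h.three_le]), Nat.cast_one] at hdeg
  have hR : ∑ v ∈ R, (#(G.neighborFinset v ∩ R) : ℝ) ≤ 2 :=
    mod_cast h.sum_inner_right_le_two hfew
  refine le_of_mul_le_mul_right ?_ (h.weight_pos v)
  calc lam * (lam - (k - 1)) * x v = lam * ((lam - (k - 1)) * x v) := by ring
    _ ≤ lam * ∑ u ∈ R, x u := by gcongr; exact h.lam_pos.le
    _ ≤ ∑ u ∈ R, (#(G.neighborFinset u ∩ R) : ℝ) + #R * ∑ u ∈ L, x u :=
      h.symm.lam_mul_sum_left_le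
    _ ≤ 2 + #R * (#L * x v) := by
      gcongr
      simpa using sum_le_card_nsmul L x _ hmax
    _ ≤ (#L * #R + 5 / 2) * x v := by linarith [h.weight_ge_const v]

lemma lt_card_highDegree_two (h : IsNearExtremal k M G lam x L R) (hk : 6 ≤ k)
    (hhigh : 2 * k ^ 2 * M < #(highDegree G R 1)) : 2 * k ^ 2 * M < #(highDegree G R 2) := by
  by_contra! hfew
  have hR : ∑ v ∈ R, (#(G.neighborFinset v ∩ R) : ℝ) ≤ 101 / 100 * lam := by
    have hcard : 1000 * #R ≤ 501 * n := by
      have := h.mul_missing_le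
      have := h.missing_le_mul
      have := h.card_left
      have := card_add_card_of_isCompl h.isCompl
      omega
    have : (1000 * #R : ℝ) ≤ 501 * n := mod_cast hcard
    have hsum := h.sum_inner_right_le hfew
    rw [Nat.cast_one, mul_one] at hsum
    linarith [h.half_le]
  have hL : ∑ v ∈ L, (#(G.neighborFinset v ∩ L) : ℝ) ≤ #L * ((2 * k - 1) / 3) := by
    rw [← nsmul_eq_mul]
    refine sum_le_card_nsmul _ _ _ fun v hv => ?_
    have hdeg := h.three_mul_inner_left_le hhigh hv
    have : (3 * #(G.neighborFinset v ∩ L) + 1 : ℝ) ≤ 2 * k :=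
      mod_cast (by omega : 3 * #(G.neighborFinset v ∩ L) + 1 ≤ 2 * k)
    linarith
  have hL_pos : (0 : ℝ) < #L := mod_cast h.nonempty_left.card_pos
  have hcoeff : (k - 1 - 1 / 1000 - 101 / 100 : ℝ) ≤ (2 * k - 1) / 3 :=
    le_of_mul_le_mul_right ((h.mul_card_left_le_sum hR).trans (hL.trans_eq (mul_comm ..))) hL_pos
  have : (6 : ℝ) ≤ k := mod_cast hk
  linarith

theorem lam_mul_lam_sub_le (h : IsNearExtremal k M G lam x L R) (hk4 : k ≠ 4) (hk5 : k ≠ 5) :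
    lam * (lam - (k - 1)) ≤ #L * #R + 5 / 2 := by
  have hk := h.three_le
  by_cases hR : #(highDegree G R 1) ≤ 2 * k ^ 2 * M
  · exact h.lam_mul_lam_sub_le_of_few_edges hR
  by_cases hL : #(highDegree G L 1) ≤ 2 * k ^ 2 * M
  · rw [mul_comm (#L : ℝ)]
    exact h.symm.lam_mul_lam_sub_le_of_few_edges hL
  rw [not_le] at hR hL
  suffices hdeg : (∀ v ∈ L, #(G.neighborFinset v ∩ L) ≤ (k - 1) / 2) ∧
      ∀ v ∈ R, #(G.neighborFinset v ∩ R) ≤ (k - 1) / 2 by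
    linarith [h.lam_mul_lam_sub_le_of_inner_le hdeg.1 hdeg.2 (by omega)]
  obtain rfl | hk6 : k = 3 ∨ 6 ≤ k := by omega
  · refine ⟨fun v hv => ?_, fun v hv => ?_⟩
    · have := h.three_mul_inner_left_le hR hv
      omega
    · have := h.symm.three_mul_inner_left_le hL hv
      omega
  · refine ⟨fun v hv => ?_, fun v hv => ?_⟩
    · have := h.two_mul_inner_left_le (h.lt_card_highDegree_two hk6 hR) hv
      omega
    · have := h.symm.two_mul_inner_left_le (h.symm.lt_card_highDegree_two hk6 hL) hv
      omega

end IsNearExtremal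

/-! ### Comparison with the competitor -/

section Conclusion

variable {n k M : ℕ} {G : SimpleGraph (Fin n)} {L R : Finset (Fin n)} {x : Fin n → ℝ}

lemma exists_balanced_le_of_isSpexWheel (hk : 3 ≤ k) (hn : 4 * k ^ 2 ≤ n)
    (hG : IsSpexWheel (2 * k + 1) G) : ∃ l r : ℕ, l + r = n ∧ l ≤ r + 2 ∧ r ≤ l + 2 ∧
      (l : ℝ) * r + 1 ≤ lam1 G * (lam1 G - (k - 1)) := by
  obtain ⟨H, hfree, hpos, l, r, hlr, hl, hr, hle⟩ := exists_wheelFree_near_balanced hk hn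
  refine ⟨l, r, hlr, hl, hr, hle.trans ?_⟩
  have hgap : 0 < lam1 H - (k - 1) :=
    pos_of_mul_pos_right ((by positivity : (0 : ℝ) < l * r + 1).trans_le hle) hpos.le
  have hHG := hG.2 H hfree
  gcongr
  exact hpos.le.trans hHG

lemma sq_div_four_le_of_isSpexWheel (hk : 3 ≤ k) (hn : 4 * k ^ 2 ≤ n)
    (hG : IsSpexWheel (2 * k + 1) G) : (n : ℝ) ^ 2 / 4 ≤ lam1 G * (lam1 G - (k - 1)) := by
  obtain ⟨l, r, hlr, hl, hr, hle⟩ := exists_balanced_le_of_isSpexWheel hk hn hG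
  have hl' : (l : ℝ) ≤ r + 2 := mod_cast hl
  have hr' : (r : ℝ) ≤ l + 2 := mod_cast hr
  have hsq : (l - r : ℝ) ^ 2 ≤ 2 ^ 2 := sq_le_sq' (by linarith) (by linarith)
  have hlr' : (l + r : ℝ) = n := mod_cast hlr
  rw [← hlr']
  linarith

lemma half_le_lam1_of_isSpexWheel (hk : 3 ≤ k) (hn : 4 * k ^ 2 ≤ n)
    (hG : IsSpexWheel (2 * k + 1) G) : (n : ℝ) / 2 ≤ lam1 G := by
  obtain ⟨H, hfree, hpos, -⟩ := exists_wheelFree_near_balanced hk hn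
  have hlam : 0 ≤ lam1 G := hpos.le.trans (hG.2 H hfree)
  have hk' : (3 : ℝ) ≤ k := mod_cast hk
  refine le_of_sq_le_sq ?_ hlam
  linarith [sq_div_four_le_of_isSpexWheel hk hn hG, mul_nonneg hlam (by linarith : 0 ≤ (k : ℝ) - 1)]

lemma IsDenseCut.mul_lt_card [DecidableRel G.Adj] (h : IsDenseCut G (M / 8) L R) (hk : 3 ≤ k)
    (hM : 8 ≤ M) (hMn : 1000 * k ^ 3 * M ≤ n) : ((2 * k + 1) * (M / 8 + 1) : ℝ) < #L := by
  have hk' : (3 : ℝ) ≤ k := mod_cast hk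
  have hM' : (8 : ℝ) ≤ M := mod_cast hM
  have hn : (9000 * k * M : ℝ) ≤ n := by
    calc (9000 * k * M : ℝ) = 1000 * (3 ^ 2 * k) * M := by ring
      _ ≤ 1000 * (k ^ 2 * k) * M := by gcongr
      _ = 1000 * k ^ 3 * M := by ring
      _ ≤ n := mod_cast hMn
  have hkM : (3 * 8 : ℝ) ≤ k * M := by gcongr
  calc ((2 * k + 1) * (M / 8 + 1) : ℝ) ≤ (2 * k + k) * (M / 8 + M / 8) := by gcongr <;> linarith
    _ < n / 2 - M / 8 := by nlinarith
    _ ≤ #L := by linarith [(abs_le.1 (h.abs_card_sub_le (by positivity))).1]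

lemma one_sub_inv_le_of_mul_one_sub_le {t : ℝ} (hk : 1 ≤ k) (hM : 1 ≤ M)
    (hMn : 1000 * k ^ 3 * M ≤ n) (ht : (n : ℝ) / 2 * (1 - t) ≤ M / 2) :
    1 - 1 / (1000 * k) ≤ t := by
  have hk' : (1 : ℝ) ≤ k := mod_cast hk
  have : (0 : ℝ) < M := mod_cast hM
  have hn : (1000 * k * M : ℝ) ≤ n := by
    calc (1000 * k * M : ℝ) ≤ 1000 * k ^ 3 * M := by
          gcongr; exact le_self_pow₀ hk' (by norm_num)
      _ ≤ n := mod_cast hMn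
  have hn_pos : (0 : ℝ) < n := hn.trans_lt' (by positivity)
  have hle : 1 - t ≤ 1 / (1000 * k) := calc
    1 - t ≤ M / n := (le_div_iff₀ hn_pos).2 (by linarith)
    _ ≤ M / (1000 * k * M) := by gcongr
    _ = 1 / (1000 * k) := by field_simp
  linarith

theorem exists_isNearExtremal [DecidableRel G.Adj] (hk : 3 ≤ k) (hM : 8 ≤ M)
    (hMn : 1000 * k ^ 3 * M ≤ n) (hG : IsSpexWheel (2 * k + 1) G) (hmax : IsMaxCut G L R)
    (hsparse : ∀ v, ∑ u ∈ G.neighborFinset v, (#(G.neighborFinset u ∩ G.neighborFinset v) : ℝ) ≤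
      (M / 8 : ℝ) ^ 2) : ∃ x, IsNearExtremal k M G (lam1 G) x L R := by
  have hn : 4 * k ^ 2 ≤ n := calc
    4 * k ^ 2 = 4 * k ^ 2 * 1 := by ring
    _ ≤ 1000 * k ^ 3 * M := by gcongr <;> lia
    _ ≤ n := hMn
  have : NeZero n := ⟨by nlinarith⟩
  have hn_pos : (0 : ℝ) < n := mod_cast NeZero.pos n
  have hδ : (1 : ℝ) ≤ M / 8 := (one_le_div (by norm_num)).2 (mod_cast hM)
  have hlam := half_le_lam1_of_isSpexWheel hk hn hG
  obtain ⟨x, hx⟩ := exists_isPerronVector (G := G)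
  have hcut := isDenseCut_of_isMaxCut hx hlam (by positivity) hsparse hmax
  have hweight := hcut.lam1_mul_one_sub_le hδ hG hx (by linarith) (hcut.mul_lt_card hk hM hMn)
    (hcut.symm.mul_lt_card hk hM hMn)
  have hcard {A B : Finset (Fin n)} (h : IsDenseCut G (M / 8) A B) : n ≤ 2 * (#A + M) := by
    have := (abs_le.1 (h.abs_card_sub_le (by positivity))).1
    exact_mod_cast (by linarith : (n : ℝ) ≤ 2 * (#A + M))
  have hmissing {A B : Finset (Fin n)} (h : IsDenseCut G (M / 8) A B) (v) (hv : v ∈ A) :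
      #(B \ G.neighborFinset v) ≤ M := by
    have := h.card_right_sdiff_le (by positivity) hx hlam hweight hv
    exact_mod_cast (by linarith : (#(B \ G.neighborFinset v) : ℝ) ≤ M)
  refine ⟨x, hcut.isCompl, hk, hG.1, hx, fun v => ?_, hlam, by lia, hMn, hcard hcut,
    hcard hcut.symm, hmissing hcut, hmissing hcut.symm, ?_⟩
  · refine one_sub_inv_le_of_mul_one_sub_le (by lia) (by lia) hMn ?_
    calc (n : ℝ) / 2 * (1 - x v) ≤ lam1 G * (1 - x v) := by
          gcongr; exact sub_nonneg.2 (hx.le_one v)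
      _ ≤ M / 2 := by linarith [hweight v]
  · have hLR : (#L + #R : ℝ) = n := mod_cast card_add_card_of_isCompl hcut.isCompl
    refine le_trans ?_ (sq_div_four_le_of_isSpexWheel hk hn hG)
    rw [← hLR]
    linarith [sq_nonneg (#L - #R : ℝ)]

theorem exists_forall_isNearExtremal (hk : 3 ≤ k) :
    ∃ N, ∀ n, N ≤ n → ∀ (G : SimpleGraph (Fin n)) [DecidableRel G.Adj],
      IsSpexWheel (2 * k + 1) G → ∀ L R, IsMaxCut G L R →
        ∃ M x, IsNearExtremal k M G (lam1 G) x L R := by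
  have hk_pos : 0 < k := by lia
  obtain ⟨N, hN⟩ := exists_sum_card_neighborFinset_inter_le hk_pos
    (by positivity : (0 : ℝ) < (1 / (16000 * k ^ 3)) ^ 2)
  refine ⟨max N (8000 * k ^ 3), fun n hn G _ hG L R hmax => ?_⟩
  set M := n / (1000 * k ^ 3)
  have hM : 8 ≤ M := (Nat.le_div_iff_mul_le (by positivity)).2 (by lia)
  have hnM : n ≤ 2000 * k ^ 3 * M := calc
    n ≤ 1000 * k ^ 3 * (M + 1) := (Nat.lt_mul_div_succ n (by positivity)).le
    _ ≤ 1000 * k ^ 3 * (M + M) := by gcongr; lia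
    _ = 2000 * k ^ 3 * M := by ring
  refine ⟨M, exists_isNearExtremal hk hM (Nat.mul_div_le ..) hG hmax fun v => ?_⟩
  have hnM' : (n : ℝ) ≤ 2000 * k ^ 3 * M := mod_cast hnM
  calc _ ≤ (1 / (16000 * k ^ 3) : ℝ) ^ 2 * n ^ 2 := hN n (by lia) G hG.1 v
    _ = (n / (16000 * k ^ 3) : ℝ) ^ 2 := by ring
    _ ≤ (2000 * k ^ 3 * M / (16000 * k ^ 3) : ℝ) ^ 2 := by gcongr
    _ = (M / 8 : ℝ) ^ 2 := by field_simp; norm_num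

lemma le_add_two_of_mul_le_mul_add_one {l r l₀ r₀ : ℕ} (hsum : l + r = l₀ + r₀)
    (hl₀ : l₀ ≤ r₀ + 2) (hr₀ : r₀ ≤ l₀ + 2) (h : l₀ * r₀ ≤ l * r + 1) : l ≤ r + 2 := by
  by_contra! hlt
  obtain ⟨t, rfl⟩ := Nat.exists_eq_add_of_lt hlt
  obtain ⟨d, hd⟩ : ∃ d : ℤ, (l₀ : ℤ) = r₀ + d := ⟨l₀ - r₀, by ring⟩
  have hd_le : d ≤ 2 := by lia
  have hd_ge : -2 ≤ d := by lia
  zify at h hsum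
  rw [hd] at h hsum
  have hsq : (t + 3 : ℤ) ^ 2 ≤ d ^ 2 + 4 := by nlinarith
  interval_cases d <;> lia

end Conclusion

end SpexWheel

/-- The two sides of a maximum cut have size between `n/2 - 1` and
`n/2 + 1`. -/
theorem almost_balanced (k : ℕ) (hk : 3 ≤ k) (hk4 : k ≠ 4) (hk5 : k ≠ 5) :
    ∃ N : ℕ, ∀ n : ℕ, N ≤ n → ∀ G : SimpleGraph (Fin n), IsSpexWheel (2 * k + 1) G →
      ∀ L R : Finset (Fin n), IsMaxCut G L R →
        (n : ℝ) / 2 - 1 ≤ (L.card : ℝ) ∧ (L.card : ℝ) ≤ (n : ℝ) / 2 + 1 ∧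
        (n : ℝ) / 2 - 1 ≤ (R.card : ℝ) ∧ (R.card : ℝ) ≤ (n : ℝ) / 2 + 1 := by
  classical
  obtain ⟨N, hN⟩ := SpexWheel.exists_forall_isNearExtremal hk
  refine ⟨max N (4 * k ^ 2), fun n hn G hG L R hmax => ?_⟩
  obtain ⟨M, x, h⟩ := hN n (le_of_max_le_left hn) G hG L R hmax
  obtain ⟨l, r, hlr, hl, hr, hge⟩ :=
    SpexWheel.exists_balanced_le_of_isSpexWheel hk (le_of_max_le_right hn) hG
  have hcard : L.card + R.card = n := SpexWheel.card_add_card_of_isCompl h.isCompl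
  have hmul : l * r ≤ L.card * R.card + 1 := by
    have hlt : (l * r : ℝ) < L.card * R.card + 1 + 1 := by
      linarith [h.lam_mul_lam_sub_le hk4 hk5]
    exact Nat.le_of_lt_succ (mod_cast hlt)
  have hLR : (L.card : ℝ) ≤ R.card + 2 := mod_cast
    SpexWheel.le_add_two_of_mul_le_mul_add_one (hcard.trans hlr.symm) hl hr hmul
  have hRL : (R.card : ℝ) ≤ L.card + 2 := mod_cast
    SpexWheel.le_add_two_of_mul_le_mul_add_one (by lia) hl hr (by rwa [mul_comm R.card])
  have hsum : (L.card + R.card : ℝ) = n := mod_cast hcard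
  refine ⟨?_, ?_, ?_, ?_⟩ <;> linarith
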